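/- arXiv:1503.05704 — 14 statements merged into one kernel-verified Lean document; each statement's English description precedes it below -/
import Mathlib

section
/- Let q ≥ 1 and let C be a Z_q-linear code of length n (a ZMod q-submodule of Fin n → ZMod q). Then the set D = { ĉ + α • v* : c ∈ C, α ∈ ZMod q } is a ZMod q-submodule of Fin (q*n+1) → ZMod q, and its cardinality equals q times the cardinality of C. -/
/-- `chat q n c` is the word `(c, 0, c, c, …, c)` of length `q*n + 1`: a copy of `c`, then a
single `0` coordinate, then `q - 1` further copies of `c`. -/
def chat (q n : ℕ) (c : Fin n → ZMod q) : Fin (q * n + 1) → ZMod q := fun i =>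
  if h1 : (i : ℕ) = n then 0
  else if h2 : (i : ℕ) < n then c ⟨(i : ℕ), h2⟩
  else c ⟨((i : ℕ) - 1) % n, by
    rcases Nat.eq_zero_or_pos n with h0 | h0
    · subst h0; have := i.isLt; simp at this; omega
    · exact Nat.mod_lt _ h0⟩

/-- `vstar q n` is the word `(0,…,0, 1, 1,…,1, 2,…,2, …, q-1,…,q-1)` of length `q*n + 1`:
`n` zeros, a single `1`, and then for each `j = 1, …, q-1` a block of `n` coordinates equal
to `j`. -/
def vstar (q n : ℕ) : Fin (q * n + 1) → ZMod q := fun i =>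
  if (i : ℕ) < n then 0
  else if (i : ℕ) = n then 1
  else ((((i : ℕ) - 1) / n : ℕ) : ZMod q)

lemma chat_add' (q n : ℕ) (c d : Fin n → ZMod q) : chat q n (c + d) = chat q n c + chat q n d := by
  funext i
  simp only [chat, Pi.add_apply]
  split_ifs <;> simp

lemma chat_smul' (q n : ℕ) (a : ZMod q) (c : Fin n → ZMod q) :
    chat q n (a • c) = a • chat q n c := by
  funext i
  simp only [chat, Pi.smul_apply]
  split_ifs <;> simp

def dmap (q n : ℕ) : ((Fin n → ZMod q) × ZMod q) →ₗ[ZMod q] (Fin (q * n + 1) → ZMod q) where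
  toFun p := chat q n p.1 + p.2 • vstar q n
  map_add' p r := by
    simp only [Prod.fst_add, Prod.snd_add, chat_add', add_smul]
    abel
  map_smul' a p := by
    simp only [Prod.smul_fst, Prod.smul_snd, chat_smul', smul_add, RingHom.id_apply, smul_assoc]

lemma dmap_inj (q n : ℕ) (hq : 1 ≤ q) : Function.Injective (dmap q n) := by
  rintro ⟨c, a⟩ ⟨d, b⟩ h
  have hn : n ≤ q * n := Nat.le_mul_of_pos_left n hq
  have hab : a = b := by
    have := congrFun h ⟨n, by omega⟩
    simpa [dmap, chat, vstar] using this
  have hcd : c = d := by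
    funext i
    have hi := i.isLt
    have := congrFun h ⟨i, by omega⟩
    simpa [dmap, chat, vstar, hi.ne] using this
  rw [hab, hcd]

/-- The set `D = { ĉ + α • v* : c ∈ C, α ∈ ZMod q }` is a `ZMod q`-submodule of
`Fin (q*n+1) → ZMod q`, and its cardinality is `q` times the cardinality of `C`. -/
theorem D_submodule_and_card (q n : ℕ) (hq : 1 ≤ q)
    (C : Submodule (ZMod q) (Fin n → ZMod q)) :
    (∃ D : Submodule (ZMod q) (Fin (q * n + 1) → ZMod q),
        (D : Set (Fin (q * n + 1) → ZMod q)) =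
          {w | ∃ c ∈ C, ∃ α : ZMod q, w = chat q n c + α • vstar q n}) ∧
      Set.ncard {w | ∃ c ∈ C, ∃ α : ZMod q, w = chat q n c + α • vstar q n} =
        q * Set.ncard (C : Set (Fin n → ZMod q)) := by
  have hS : {w | ∃ c ∈ C, ∃ α : ZMod q, w = chat q n c + α • vstar q n} =
      dmap q n '' ((C : Set (Fin n → ZMod q)) ×ˢ (Set.univ : Set (ZMod q))) := by
    ext w
    constructor
    · rintro ⟨c, hc, a, rfl⟩
      exact ⟨(c, a), ⟨hc, trivial⟩, rfl⟩
    · rintro ⟨⟨c, a⟩, ⟨hc, -⟩, rfl⟩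
      exact ⟨c, hc, a, rfl⟩
  rw [hS]
  refine ⟨⟨(C.prod ⊤).map (dmap q n), ?_⟩, ?_⟩
  · simp [Submodule.map_coe, Submodule.prod_coe]
  · rw [Set.ncard_image_of_injective _ (dmap_inj q n hq), Set.ncard_prod, Set.ncard_univ,
      Nat.card_zmod, mul_comm]
end

section
/- Let q ≥ 2 be an even integer and let C be a Z_q-linear code of length n containing a nonzero word; let d be the minimum Hamming weight of the nonzero words of C. Suppose there exists c ∈ C all of whose coordinates lie in {0, q/2} (where q/2 is taken in ZMod q), and suppose n ≤ 2d - 1. Then the minimum Hamming weight of the nonzero words of D equals (q/2)·n + 1. -/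
/-- The Hamming weight of a word: the number of nonzero coordinates. -/
noncomputable def hwt {q : ℕ} {I : Type*} (x : I → ZMod q) : ℕ :=
  Set.ncard {i | x i ≠ 0}

lemma hwt_eq_sum {q m : ℕ} (x : Fin m → ZMod q) :
    hwt x = ∑ i, if x i ≠ 0 then 1 else 0 := by
  classical
  unfold hwt
  rw [Set.ncard_eq_toFinset_card', Finset.sum_boole]
  simp

lemma hwt_D {q n : ℕ} [NeZero q] (c : Fin n → ZMod q) (α : ZMod q) :
    hwt (chat q n c + α • vstar q n) =
      (if α ≠ 0 then 1 else 0) + ∑ i, ∑ j : ZMod q, if c i + α * j ≠ 0 then 1 else 0 := by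
  have hq : 1 ≤ q := NeZero.one_le
  have hp : n < q * n + 1 := by nlinarith
  rw [hwt_eq_sum, Fin.sum_univ_succAbove _ (⟨n, hp⟩ : Fin (q * n + 1))]
  congr 1
  · simp [chat, vstar]
  rw [← Equiv.sum_comp finProdFinEquiv, Fintype.sum_prod_type, Finset.sum_comm]
  refine Finset.sum_congr rfl fun i _ => ?_
  have key : ∀ j : Fin q, (chat q n c + α • vstar q n)
      ((⟨n, hp⟩ : Fin (q * n + 1)).succAbove (finProdFinEquiv (j, i)))
      = c i + α * ((j : ℕ) : ZMod q) := by
    intro j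
    have hn : 0 < n := i.pos
    by_cases hj : (j : ℕ) = 0
    · rw [Fin.succAbove_of_castSucc_lt]
      · simp [chat, vstar, finProdFinEquiv, hj, i.isLt.ne]
      · simp [Fin.lt_def, finProdFinEquiv, hj]
    · have h1 : n ≤ n * (j : ℕ) := Nat.le_mul_of_pos_right _ (Nat.pos_of_ne_zero hj)
      rw [Fin.succAbove_of_le_castSucc]
      · have e1 : ¬ ((i : ℕ) + n * j + 1 = n) := by omega
        have e2 : ¬ ((i : ℕ) + n * j + 1 < n) := by omega
        have e3 : ((i : ℕ) + n * j) / n = j := by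
          rw [Nat.add_mul_div_left _ _ hn, Nat.div_eq_of_lt i.isLt, zero_add]
        simp [chat, vstar, finProdFinEquiv, e1, e2, e3, Nat.mod_eq_of_lt i.isLt]
      · simp [Fin.le_def, finProdFinEquiv]; omega
  simp only [key]
  obtain ⟨k, rfl⟩ : ∃ k, q = k + 1 := ⟨q - 1, by omega⟩
  refine Finset.sum_congr rfl fun j _ => ?_
  have : (((j : Fin (k+1)) : ℕ) : ZMod (k + 1)) = j := ZMod.natCast_zmod_val (n := k + 1) j
  rw [this]

lemma count_ge {q : ℕ} [NeZero q] (a α : ZMod q) (hα : α ≠ 0) :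
    q ≤ 2 * ∑ j : ZMod q, if a + α * j ≠ 0 then 1 else 0 := by
  have h : ∑ j : ZMod q, (if a + α * (j + 1) ≠ 0 then 1 else 0) =
      ∑ j : ZMod q, if a + α * j ≠ 0 then 1 else 0 :=
    Equiv.sum_comp (Equiv.addRight (1 : ZMod q)) (fun j => if a + α * j ≠ 0 then 1 else 0)
  rw [two_mul]
  nth_rw 1 [← h]
  rw [← Finset.sum_add_distrib]
  calc q = ∑ j : ZMod q, 1 := by simp [ZMod.card]
    _ ≤ _ := by
      refine Finset.sum_le_sum fun j _ => ?_
      by_cases h0 : a + α * j = 0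
      · have : a + α * (j + 1) ≠ 0 := by
          rw [mul_add, ← add_assoc, h0]; simpa using hα
        simp [this]
      · simp [h0]

lemma count_le {q : ℕ} [NeZero q] (α : ZMod q) (hα : α + α = 0) :
    2 * (∑ j : ZMod q, if 0 + α * j ≠ 0 then 1 else 0) ≤ q := by
  have h : ∑ j : ZMod q, (if 0 + α * (j + 1) ≠ 0 then 1 else 0) =
      ∑ j : ZMod q, if 0 + α * j ≠ 0 then 1 else 0 :=
    Equiv.sum_comp (Equiv.addRight (1 : ZMod q)) (fun j => if 0 + α * j ≠ 0 then 1 else 0)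
  rw [two_mul]
  nth_rw 1 [← h]
  rw [← Finset.sum_add_distrib]
  calc _ ≤ ∑ j : ZMod q, 1 := by
        refine Finset.sum_le_sum fun j _ => ?_
        by_cases h0 : α * j = 0
        · simp only [h0]; split_ifs <;> simp_all
        · have : α * (j + 1) = 0 := by
            rw [← ZMod.natCast_zmod_val j] at h0 ⊢
            rcases Nat.even_or_odd' j.val with ⟨m, hm | hm⟩
            · exact absurd (by rw [hm]; push_cast; linear_combination (m : ZMod q) * hα) h0
            · rw [hm]; push_cast; linear_combination ((m : ZMod q) + 1) * hα
          simp [this, h0]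
    _ = q := by simp [ZMod.card]

/-- If `q` is even, `C` contains a word all of whose coordinates lie in `{0, q/2}`, and
`n ≤ 2d - 1` where `d` is the minimum nonzero weight of `C`, then the minimum nonzero
weight of `D = { ĉ + α • v* : c ∈ C, α ∈ ZMod q }` equals `(q/2)·n + 1`. -/
theorem min_weight_D (q n : ℕ) (hq : 2 ≤ q) (hqe : Even q)
    (C : Submodule (ZMod q) (Fin n → ZMod q))
    (hne : ∃ c ∈ C, c ≠ 0)
    (d : ℕ) (hd : d = sInf {w | ∃ c ∈ C, c ≠ 0 ∧ w = hwt c})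
    (hc : ∃ c ∈ C, ∀ i, c i = 0 ∨ c i = ((q / 2 : ℕ) : ZMod q))
    (hn : n ≤ 2 * d - 1) :
    sInf {w | ∃ x ∈ {w | ∃ c ∈ C, ∃ α : ZMod q, w = chat q n c + α • vstar q n},
        x ≠ (0 : Fin (q * n + 1) → ZMod q) ∧ w = hwt x} = (q / 2) * n + 1 := by
  haveI : NeZero q := ⟨by omega⟩
  obtain ⟨r, hr⟩ := hqe
  have hr2 : q / 2 = r := by omega
  rw [hr2]
  have hlow : ∀ w ∈ {w | ∃ x ∈ {w | ∃ c ∈ C, ∃ α : ZMod q, w = chat q n c + α • vstar q n},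
        x ≠ (0 : Fin (q * n + 1) → ZMod q) ∧ w = hwt x}, r * n + 1 ≤ w := by
    rintro w ⟨x, ⟨c, hcC, α, rfl⟩, hx, rfl⟩
    rw [hwt_D]
    by_cases hα : α = 0
    · subst hα
      have hc0 : c ≠ 0 := by
        rintro rfl
        apply hx
        ext i
        simp [chat]
      have hdle : d ≤ hwt c := by
        rw [hd]; exact Nat.sInf_le ⟨c, hcC, hc0, rfl⟩
      have hsum : (∑ i, ∑ j : ZMod q, if c i + 0 * j ≠ 0 then 1 else 0) = q * hwt c := by
        rw [hwt_eq_sum, Finset.mul_sum]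
        refine Finset.sum_congr rfl fun i _ => ?_
        simp [ZMod.card]
      rw [hsum]
      have hn0 : 0 < n := by
        rcases Nat.eq_zero_or_pos n with h | h
        · subst h; exact absurd (Subsingleton.elim c 0) hc0
        · exact h
      have : n + 1 ≤ 2 * hwt c := by omega
      have h3 := Nat.mul_le_mul_left r this
      simp only [ne_eq, not_true_eq_false, if_false]
      have : q * hwt c = r * (2 * hwt c) := by linear_combination (hwt c) * hr
      rw [this]
      nlinarith
    · have : ∑ i : Fin n, r ≤ ∑ i, ∑ j : ZMod q, if c i + α * j ≠ 0 then 1 else 0 := by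
        refine Finset.sum_le_sum fun i _ => ?_
        have := count_ge (c i) α hα
        omega
      simp only [Finset.sum_const, Finset.card_univ, Fintype.card_fin, smul_eq_mul] at this
      rw [if_pos hα]
      linarith [mul_comm n r]
  have hr0 : (r : ZMod q) ≠ 0 := by
    rw [Ne, ZMod.natCast_eq_zero_iff]
    intro h
    have := Nat.le_of_dvd (by omega) h
    omega
  have hrr : (r : ZMod q) + r = 0 := by
    have := ZMod.natCast_self q
    have h2 : ((r + r : ℕ) : ZMod q) = 0 := (congrArg (Nat.cast : ℕ → ZMod q) hr).symm.trans this
    exact_mod_cast h2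
  have hw : hwt (chat q n 0 + (r : ZMod q) • vstar q n) ≤ r * n + 1 := by
    rw [hwt_D, if_pos hr0]
    have : (∑ i : Fin n, ∑ j : ZMod q,
        if (0 : Fin n → ZMod q) i + (r : ZMod q) * j ≠ 0 then 1 else 0) ≤ ∑ i : Fin n, r := by
      refine Finset.sum_le_sum fun i _ => ?_
      have := count_le (r : ZMod q) hrr
      simp only [Pi.zero_apply]
      omega
    simp only [Finset.sum_const, Finset.card_univ, Fintype.card_fin, smul_eq_mul] at this
    linarith [mul_comm n r]
  have hmem : hwt (chat q n 0 + (r : ZMod q) • vstar q n) ∈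
      {w | ∃ x ∈ {w | ∃ c ∈ C, ∃ α : ZMod q, w = chat q n c + α • vstar q n},
        x ≠ (0 : Fin (q * n + 1) → ZMod q) ∧ w = hwt x} := by
    refine ⟨_, ⟨0, C.zero_mem, _, rfl⟩, ?_, rfl⟩
    intro h
    have := hwt_D (0 : Fin n → ZMod q) (r : ZMod q)
    rw [h, if_pos hr0] at this
    simp [hwt] at this
    omega
  exact le_antisymm ((Nat.sInf_le hmem).trans hw) (le_csInf ⟨_, hmem⟩ hlow)
end

section
/- Let q ≥ 2 be an even integer and let k ≥ 2. Then the Z_q-Simplex code S_k(q) has exactly q^k codewords, its length (the cardinality of V_k) is (q^k - 1)/(q - 1), and its minimum nonzero Hamming weight equals (q/2)·n_{k-1} + 1, where n_{k-1} = (q^{k-1} - 1)/(q - 1). -/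
/-- `Vset q k` consists of the nonzero words `v : Fin k → ZMod q` whose last nonzero
coordinate equals `1` (one representative from each free rank-one submodule). -/
def Vset (q k : ℕ) : Set (Fin k → ZMod q) :=
  {v | v ≠ 0 ∧ ∃ m : Fin k, v m ≠ 0 ∧ (∀ i, m < i → v i = 0) ∧ v m = 1}

/-- The `ZMod q`-Simplex code of dimension `k`: the words obtained by evaluating a linear
form `u` at all columns `v ∈ Vset q k`. -/
def SimplexCode (q k : ℕ) : Set (↥(Vset q k) → ZMod q) :=
  {c | ∃ u : Fin k → ZMod q, c = fun v : ↥(Vset q k) => ∑ i, u i * v.1 i}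

lemma mem_Vset_snoc {q k : ℕ} (hq : 2 ≤ q) (v : Fin k → ZMod q) (a : ZMod q) :
    (Fin.snoc v a : Fin (k+1) → ZMod q) ∈ Vset q (k+1) ↔ (a = 0 ∧ v ∈ Vset q k) ∨ a = 1 := by
  have : Fact (1 < q) := ⟨hq⟩
  constructor
  · rintro ⟨_, m, hm0, hm, hm1⟩
    induction m using Fin.lastCases with
    | last => right; simpa using hm1
    | cast m =>
      left
      have ha : a = 0 := by simpa using hm (Fin.last k) (Fin.castSucc_lt_last m)
      refine ⟨ha, ?_, m, by simpa using hm0, ?_, by simpa using hm1⟩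
      · intro h
        apply hm0
        simp [h]
      · intro i hi
        simpa using hm i.castSucc (by simpa using hi)
  · rintro (⟨rfl, hv, m, hm0, hm, hm1⟩ | rfl)
    · refine ⟨?_, m.castSucc, by simpa using hm0, ?_, by simpa using hm1⟩
      · intro h
        apply hm0
        simpa using congrFun h m.castSucc
      · intro i hi
        induction i using Fin.lastCases with
        | last => simp
        | cast i => simpa using hm i (by simpa using hi)
    · refine ⟨?_, Fin.last k, by simp, ?_, by simp⟩
      · intro h
        simpa using congrFun h (Fin.last k)
      · intro i hi
        exact absurd hi (not_lt.mpr (Fin.le_last i))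

lemma ncard_Vset_succ {q k : ℕ} (hq : 2 ≤ q) (p : (Fin (k+1) → ZMod q) → Prop) :
    {v | v ∈ Vset q (k+1) ∧ p v}.ncard =
      {v : Fin k → ZMod q | v ∈ Vset q k ∧ p (Fin.snoc v 0)}.ncard +
      {v : Fin k → ZMod q | p (Fin.snoc v 1)}.ncard := by
  have : Fact (1 < q) := ⟨hq⟩
  have : NeZero q := ⟨by omega⟩
  have inj : ∀ a : ZMod q, Function.Injective
      (fun v : Fin k → ZMod q => (Fin.snoc v a : Fin (k+1) → ZMod q)) := by
    intro a v w h
    exact (Fin.snoc_inj.mp h).1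
  rw [← Set.ncard_image_of_injective _ (inj 0), ← Set.ncard_image_of_injective _ (inj 1),
    ← Set.ncard_union_eq ?_ (Set.toFinite _) (Set.toFinite _)]
  · congr 1
    ext v
    constructor
    · rintro ⟨hv, hp⟩
      rw [← Fin.snoc_init_self v] at hv hp
      rw [← Fin.snoc_init_self v]
      rcases (mem_Vset_snoc hq _ _).mp hv with ⟨h0, h⟩ | h
      · left
        rw [h0] at hp ⊢
        exact ⟨_, ⟨h, hp⟩, rfl⟩
      · right
        rw [h] at hp ⊢
        exact ⟨_, hp, rfl⟩
    · rintro (⟨w, ⟨hw, hp⟩, rfl⟩ | ⟨w, hp, rfl⟩)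
      · exact ⟨(mem_Vset_snoc hq _ _).mpr (Or.inl ⟨rfl, hw⟩), hp⟩
      · exact ⟨(mem_Vset_snoc hq _ _).mpr (Or.inr rfl), hp⟩
  · rw [Set.disjoint_left]
    rintro _ ⟨v, _, rfl⟩ ⟨w, _, h⟩
    exact one_ne_zero (Fin.snoc_inj.mp h).2

lemma ncard_all {q k : ℕ} (hq : 2 ≤ q) : (Set.univ : Set (Fin k → ZMod q)).ncard = q ^ k := by
  have : NeZero q := ⟨by omega⟩
  rw [Set.ncard_univ, Nat.card_eq_fintype_card]
  simp [ZMod.card]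

lemma Vset_zero (q : ℕ) : Vset q 0 = ∅ := by
  ext v
  simp only [Set.mem_empty_iff_false, iff_false]
  rintro ⟨_, m, _⟩
  exact m.elim0

lemma ncard_Vset {q : ℕ} (hq : 2 ≤ q) (k : ℕ) :
    (Vset q k).ncard = ∑ i ∈ Finset.range k, q ^ i := by
  induction k with
  | zero => simp [Vset_zero]
  | succ k ih =>
    have h := ncard_Vset_succ (k := k) hq (fun _ => True)
    simp only [and_true, Set.setOf_mem_eq, Set.setOf_true] at h
    rw [h, ih, ncard_all hq, Finset.sum_range_succ]

/-- weight of the evaluation word of `u` -/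
noncomputable def Wt {q k : ℕ} (u : Fin k → ZMod q) : ℕ :=
  {v | v ∈ Vset q k ∧ ∑ i, u i * v i ≠ 0}.ncard

lemma Wt_snoc {q k : ℕ} (hq : 2 ≤ q) (u : Fin k → ZMod q) (a : ZMod q) :
    Wt (Fin.snoc u a : Fin (k+1) → ZMod q) =
      Wt u + {v : Fin k → ZMod q | ∑ i, u i * v i + a ≠ 0}.ncard := by
  unfold Wt
  rw [ncard_Vset_succ hq]
  simp [Fin.sum_univ_castSucc]

lemma ncard_split {q k : ℕ} (hq : 2 ≤ q) (f : (Fin k → ZMod q) → ZMod q) :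
    {v | f v ≠ 0}.ncard + {v | f v = 0}.ncard = q ^ k := by
  have : NeZero q := ⟨by omega⟩
  rw [← ncard_all hq, ← Set.ncard_union_eq ?_ (Set.toFinite _) (Set.toFinite _)]
  · congr 1
    ext v
    simp [em']
  · rw [Set.disjoint_left]
    intro v h1 h2
    exact h1 h2

lemma dot_shift {q k : ℕ} (u v : Fin k → ZMod q) (j : Fin k) :
    ∑ i, u i * (v + Pi.single j 1 : Fin k → ZMod q) i = ∑ i, u i * v i + u j := by
  simp [mul_add, Finset.sum_add_distrib, Pi.single_apply]

lemma half_le {q k : ℕ} (hq : 2 ≤ q) (u : Fin k → ZMod q) (hu : u ≠ 0) (a : ZMod q) :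
    q ^ k ≤ 2 * {v : Fin k → ZMod q | ∑ i, u i * v i + a ≠ 0}.ncard := by
  have : NeZero q := ⟨by omega⟩
  obtain ⟨j, hj⟩ := Function.ne_iff.mp hu
  have h := ncard_split hq (fun v : Fin k → ZMod q => ∑ i, u i * v i + a)
  have h2 : {v : Fin k → ZMod q | ∑ i, u i * v i + a = 0}.ncard ≤
      {v : Fin k → ZMod q | ∑ i, u i * v i + a ≠ 0}.ncard := by
    apply Set.ncard_le_ncard_of_injOn (fun v => v + (Pi.single j 1 : Fin k → ZMod q)) _ _ (Set.toFinite _)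
    · intro v hv
      simp only [Set.mem_ofPred_eq] at hv ⊢
      rw [dot_shift]
      intro h
      apply hj
      simp only [Pi.zero_apply]
      linear_combination h - hv
    · intro v _ w _ h
      exact add_right_cancel h
  omega

lemma half_ge {q k : ℕ} (hq : 2 ≤ q) (u : Fin k → ZMod q) (h : ZMod q) (h2 : h + h = 0)
    (hu : ∃ j, u j = h) (hv : ∀ v : Fin k → ZMod q, ∑ i, u i * v i = 0 ∨ ∑ i, u i * v i = h) :
    2 * {v : Fin k → ZMod q | ∑ i, u i * v i + 0 ≠ 0}.ncard ≤ q ^ k := by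
  have : NeZero q := ⟨by omega⟩
  obtain ⟨j, hj⟩ := hu
  have hs := ncard_split hq (fun v : Fin k → ZMod q => ∑ i, u i * v i + 0)
  have h2 : {v : Fin k → ZMod q | ∑ i, u i * v i + 0 ≠ 0}.ncard ≤
      {v : Fin k → ZMod q | ∑ i, u i * v i + 0 = 0}.ncard := by
    apply Set.ncard_le_ncard_of_injOn (fun v => v + (Pi.single j 1 : Fin k → ZMod q)) _ _ (Set.toFinite _)
    · intro v hv'
      simp only [Set.mem_ofPred_eq, add_zero] at hv' ⊢
      rw [dot_shift, (hv v).resolve_left hv', hj, h2]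
    · intro v _ w _ h
      exact add_right_cancel h
  omega

lemma geom {q : ℕ} (hq : 2 ≤ q) (k : ℕ) :
    ∑ i ∈ Finset.range k, q ^ i = (q ^ k - 1) / (q - 1) := Nat.geomSum_eq hq k

lemma geom_bound {r : ℕ} (hr : 1 ≤ r) (k : ℕ) :
    r * ∑ i ∈ Finset.range k, (2 * r) ^ i + 1 ≤ (2 * r) ^ k := by
  induction k with
  | zero => simp
  | succ k ih =>
    rw [Finset.sum_range_succ, pow_succ]
    nlinarith [Nat.mul_le_mul_left ((2 * r) ^ k) hr]

lemma Wt_zero {q k : ℕ} : Wt (0 : Fin k → ZMod q) = 0 := by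
  simp [Wt]

lemma lower {q r : ℕ} (hr : 1 ≤ r) (hqr : q = 2 * r) (k : ℕ) (u : Fin (k+1) → ZMod q)
    (hu : u ≠ 0) : r * ∑ i ∈ Finset.range k, q ^ i + 1 ≤ Wt u := by
  have hq : 2 ≤ q := by omega
  induction k with
  | zero =>
    rw [← Fin.snoc_init_self u, Wt_snoc hq]
    have h0 : u (Fin.last 0) ≠ 0 := by
      intro h; apply hu; ext i; fin_cases i; simpa using h
    have : {v : Fin 0 → ZMod q | ∑ i, (Fin.init u : Fin 0 → ZMod q) i * v i + u (Fin.last 0) ≠ 0}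
      = Set.univ := by ext v; simpa using h0
    rw [this, ncard_all hq]
    simp
  | succ k ih =>
    by_cases h : (Fin.init u : Fin (k+1) → ZMod q) = 0
    · have h0 : u (Fin.last (k+1)) ≠ 0 := by
        intro h'; apply hu
        rw [← Fin.snoc_init_self u, h, h']
        ext i
        induction i using Fin.lastCases <;> simp
      rw [← Fin.snoc_init_self u, Wt_snoc hq, h]
      have : {v : Fin (k+1) → ZMod q | ∑ i, (0 : Fin (k+1) → ZMod q) i * v i
          + u (Fin.last (k+1)) ≠ 0} = Set.univ := by ext v; simpa using h0
      rw [this, ncard_all hq]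
      have := geom_bound hr (k+1)
      rw [hqr]
      omega
    · have h1 := ih _ h
      have h2 := half_le hq _ h (u (Fin.last (k+1)))
      rw [← Fin.snoc_init_self u, Wt_snoc hq, Finset.sum_range_succ, mul_add]
      have h3 : q ^ (k+1) = 2 * (r * q ^ k) := by rw [pow_succ]; nth_rw 2 [hqr]; ring
      omega

lemma upper {q r : ℕ} (hr : 1 ≤ r) (hqr : q = 2 * r) (k : ℕ) :
    ∃ u : Fin (k+1) → ZMod q, (∃ j, u j = (r : ZMod q)) ∧
      (∀ v : Fin (k+1) → ZMod q, ∑ i, u i * v i = 0 ∨ ∑ i, u i * v i = (r : ZMod q)) ∧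
      Wt u ≤ r * ∑ i ∈ Finset.range k, q ^ i + 1 := by
  have hq : 2 ≤ q := by omega
  have : NeZero q := ⟨by omega⟩
  have hrr : (r : ZMod q) + r = 0 := by
    have : ((2 * r : ℕ) : ZMod q) = 0 := by rw [← hqr]; simp
    push_cast at this
    linear_combination this
  induction k with
  | zero =>
    refine ⟨fun _ => r, ⟨0, rfl⟩, ?_, ?_⟩
    · intro v
      rw [Fin.sum_univ_one, ← ZMod.natCast_zmod_val (v 0)]
      rcases Nat.even_or_odd' (v 0).val with ⟨c, h | h⟩
      · left; rw [h]; push_cast; linear_combination (c : ZMod q) * hrr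
      · right; rw [h]; push_cast; linear_combination (c : ZMod q) * hrr
    · have h := Set.ncard_le_ncard (s := {v | v ∈ Vset q 1 ∧ ∑ i, (r : ZMod q) * v i ≠ 0})
        (t := Vset q 1) (fun v hv => hv.1) (Set.toFinite _)
      rw [ncard_Vset hq] at h
      simpa [Wt] using h
  | succ k ih =>
    obtain ⟨u, ⟨j, hj⟩, hv, hW⟩ := ih
    refine ⟨Fin.snoc u 0, ⟨j.castSucc, by simpa using hj⟩, ?_, ?_⟩
    · intro v
      have := hv (fun i => v i.castSucc)
      rw [Fin.sum_univ_castSucc]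
      simpa using this
    · rw [Wt_snoc hq, Finset.sum_range_succ, mul_add]
      have h2 := half_ge hq u _ hrr ⟨j, hj⟩ hv
      have h3 : q ^ (k+1) = 2 * (r * q ^ k) := by rw [pow_succ]; nth_rw 2 [hqr]; ring
      omega

lemma hwt_eq {q k : ℕ} (u : Fin k → ZMod q) :
    hwt (fun v : ↥(Vset q k) => ∑ i, u i * v.1 i) = Wt u := by
  unfold hwt Wt
  rw [← Set.ncard_image_of_injective _ Subtype.val_injective]
  congr 1
  ext v
  simp [and_comm]

lemma word_inj {q k : ℕ} (hq : 2 ≤ q) : Function.Injective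
    (fun (u : Fin k → ZMod q) (v : ↥(Vset q k)) => ∑ i, u i * v.1 i) := by
  have : Fact (1 < q) := ⟨hq⟩
  intro u w h
  ext j
  have hj : (Pi.single j 1 : Fin k → ZMod q) ∈ Vset q k := by
    refine ⟨by simp, j, by simp, fun i hi => ?_, by simp⟩
    simp [Pi.single_apply, hi.ne']
  simpa [Pi.single_apply] using congrFun h ⟨_, hj⟩

/-- For even `q` and `k ≥ 2`, the `ZMod q`-Simplex code `S_k(q)` has `q^k` codewords,
length `n_k = (q^k - 1)/(q - 1)`, and minimum nonzero Hamming weight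
`(q/2)·n_{k-1} + 1` where `n_{k-1} = (q^{k-1} - 1)/(q - 1)`. -/
theorem simplex_params (q k : ℕ) (hq : 2 ≤ q) (hqe : Even q) (hk : 2 ≤ k) :
    (SimplexCode q k).ncard = q ^ k ∧
      (Vset q k).ncard = (q ^ k - 1) / (q - 1) ∧
      sInf {w | ∃ c ∈ SimplexCode q k, c ≠ 0 ∧ w = hwt c} =
        (q / 2) * ((q ^ (k - 1) - 1) / (q - 1)) + 1 := by
  refine ⟨?_, ?_, ?_⟩
  · rw [← ncard_all hq, ← Set.ncard_image_of_injective _ (word_inj hq)]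
    congr 1
    ext c
    simp [SimplexCode, eq_comm]
  · rw [ncard_Vset hq, geom hq]
  · obtain ⟨k, rfl⟩ : ∃ l, k = l + 1 := ⟨k - 1, by omega⟩
    obtain ⟨r, hr⟩ := hqe
    have hqr : q = 2 * r := by omega
    have hr1 : 1 ≤ r := by omega
    have hdiv : q / 2 = r := by omega
    rw [hdiv, Nat.add_sub_cancel, ← geom hq]
    have hlow : ∀ w ∈ {w | ∃ c ∈ SimplexCode q (k+1), c ≠ 0 ∧ w = hwt c},
        r * ∑ i ∈ Finset.range k, q ^ i + 1 ≤ w := by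
      rintro _ ⟨_, ⟨u, rfl⟩, hc, rfl⟩
      rw [hwt_eq]
      apply lower hr1 hqr
      rintro rfl
      apply hc
      ext v
      simp
    obtain ⟨u, ⟨j, hj⟩, _, hW⟩ := upper hr1 hqr k
    have hu : u ≠ 0 := by
      rintro rfl
      have h0 : (r : ZMod q) = 0 := hj.symm
      rw [ZMod.natCast_eq_zero_iff] at h0
      have := Nat.le_of_dvd (by omega) h0
      omega
    have hmem : Wt u ∈ {w | ∃ c ∈ SimplexCode q (k+1), c ≠ 0 ∧ w = hwt c} := by
      refine ⟨_, ⟨u, rfl⟩, ?_, (hwt_eq u).symm⟩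
      intro h
      apply hu
      apply word_inj hq
      simp only [h]
      ext v
      simp
    apply le_antisymm
    · exact (Nat.sInf_le hmem).trans hW
    · exact hlow _ (Nat.sInf_mem ⟨_, hmem⟩)
end

section
/- Let q ≥ 2, n ≥ 1, and let v ∈ ZMod q be nonzero and not a unit (a zero divisor). Let C_v = { a • w : a ∈ ZMod q } ⊆ (Fin n → ZMod q), where w is the constant word with all coordinates equal to v. Then the covering radius of C_v equals n. -/
/-- The Hamming distance between two words: the number of coordinates where they differ. -/
noncomputable def hdist {q : ℕ} {I : Type*} (x y : I → ZMod q) : ℕ :=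
  Set.ncard {i | x i ≠ y i}

/-- The covering radius of a code `C`: the maximum over all words `u` of the minimum Hamming
distance from `u` to a codeword of `C`. -/
noncomputable def covRad {q : ℕ} {I : Type*} (C : Set (I → ZMod q)) : ℕ :=
  sSup {r | ∃ u : I → ZMod q, r = sInf {e | ∃ c ∈ C, e = hdist u c}}

/-- The covering radius of the zero-divisor repetition code `C_v = { a • (v,…,v) }`,
where `v` is a nonzero non-unit of `ZMod q`, equals `n`. -/
theorem covRad_zero_divisor_repetition (q n : ℕ) (hq : 2 ≤ q) (hn : 1 ≤ n)
    (v : ZMod q) (hv0 : v ≠ 0) (hvu : ¬ IsUnit v) :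
    covRad {w : Fin n → ZMod q | ∃ a : ZMod q, w = a • fun _ => v} = n := by
  have hle : ∀ x y : Fin n → ZMod q, hdist x y ≤ n := by
    intro x y
    have h := Set.ncard_le_card {i | x i ≠ y i}
    simpa [hdist] using h
  apply IsGreatest.csSup_eq
  constructor
  · refine ⟨fun _ => 1, ?_⟩
    have hset : {e | ∃ c ∈ {w : Fin n → ZMod q | ∃ a : ZMod q, w = a • fun _ => v},
        e = hdist (fun _ => 1) c} = {n} := by
      have key : ∀ a : ZMod q,
          hdist (fun _ : Fin n => (1 : ZMod q)) (a • fun _ => v) = n := by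
        intro a
        have h1 : (1 : ZMod q) ≠ a * v := fun h =>
          hvu (IsUnit.of_mul_eq_one a (by rw [mul_comm]; exact h.symm))
        have h2 : {i : Fin n | (fun _ : Fin n => (1 : ZMod q)) i ≠
            (a • fun _ : Fin n => v) i} = Set.univ := by
          ext i
          simpa using h1
        unfold hdist
        rw [h2, Set.ncard_univ, Nat.card_fin]
      ext e
      constructor
      · rintro ⟨c, ⟨a, rfl⟩, rfl⟩
        exact key a
      · intro he
        exact ⟨_, ⟨0, rfl⟩, (Set.mem_singleton_iff.mp he).trans (key 0).symm⟩
    rw [hset, csInf_singleton]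
  · rintro r ⟨u, rfl⟩
    refine le_trans (Nat.sInf_le (m := hdist u ((0 : ZMod q) • fun _ => v)) ?_) (hle u _)
    exact ⟨_, ⟨0, rfl⟩, rfl⟩
end

section
/- Let q ≥ 2 and n ≥ 1, and let C ⊆ (Fin n → ZMod q) be the code consisting of all constant words (equivalently, the code generated by the all-ones word, or by u·(1,…,1) for any unit u). Then the covering radius of C equals ⌊n·(q-1)/q⌋. -/
theorem hdist_add_fib {q n : ℕ} (u : Fin n → ZMod q) (a : ZMod q) :
    hdist u (fun _ => a) + (Finset.univ.filter (fun i => u i = a)).card = n := by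
  have h : hdist u (fun _ => a) = (Finset.univ.filter (fun i => ¬ u i = a)).card := by
    unfold hdist
    rw [← Set.ncard_coe_finset]
    congr 1
    ext i
    simp
  have h2 := Finset.card_filter_add_card_filter_not (s := (Finset.univ : Finset (Fin n)))
    (fun i => u i = a)
  rw [Finset.card_univ, Fintype.card_fin] at h2
  omega

theorem exists_close {q n : ℕ} (hq : 2 ≤ q) (u : Fin n → ZMod q) :
    ∃ a : ZMod q, hdist u (fun _ => a) ≤ n * (q - 1) / q := by
  haveI : NeZero q := ⟨by omega⟩
  by_contra hcon
  push Not at hcon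
  have hs := Finset.card_eq_sum_card_fiberwise (f := u) (s := Finset.univ)
    (t := (Finset.univ : Finset (ZMod q))) (by intro x _; simp)
  rw [Finset.card_univ, Fintype.card_fin] at hs
  have hlt : ∀ a ∈ (Finset.univ : Finset (ZMod q)),
      q * (Finset.univ.filter (fun i => u i = a)).card < n := by
    intro a _
    have h1 := hcon a
    rw [Nat.div_lt_iff_lt_mul (by omega)] at h1
    have h2 := hdist_add_fib u a
    obtain ⟨k, rfl⟩ : ∃ k, q = k + 1 := ⟨q - 1, by omega⟩
    simp only [Nat.add_sub_cancel] at h1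
    nlinarith
  have h3 := Finset.sum_lt_sum_of_nonempty Finset.univ_nonempty hlt
  rw [← Finset.mul_sum, ← hs] at h3
  simp [ZMod.card] at h3

theorem far_word {q n : ℕ} (hq : 2 ≤ q) (hn : 1 ≤ n) (a : ZMod q) :
    n * (q - 1) / q ≤ hdist (fun i : Fin n => ((i : ℕ) : ZMod q)) (fun _ => a) := by
  have h2 := hdist_add_fib (fun i : Fin n => ((i : ℕ) : ZMod q)) a
  have h3 : (Finset.univ.filter (fun i : Fin n => ((i : ℕ) : ZMod q) = a)).card
      ≤ (Finset.range ((n - 1) / q + 1)).card := by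
    apply Finset.card_le_card_of_injOn (fun i : Fin n => (i : ℕ) / q)
    · intro i _
      have : (i : ℕ) / q ≤ (n - 1) / q := Nat.div_le_div_right (by omega)
      simp
      omega
    · intro i hi j hj hij
      simp only [Finset.coe_filter, Finset.mem_univ, true_and, Set.mem_setOf_eq] at hi hj
      have h4 : (i : ℕ) % q = (j : ℕ) % q :=
        (ZMod.natCast_eq_natCast_iff' _ _ _).1 (hi.trans hj.symm)
      simp only at hij
      apply Fin.ext
      rw [← Nat.div_add_mod (i : ℕ) q, ← Nat.div_add_mod (j : ℕ) q, h4, hij]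
  rw [Finset.card_range] at h3
  have h5 := Nat.div_mul_le_self (n - 1) q
  rw [← Nat.lt_succ_iff, Nat.div_lt_iff_lt_mul (by omega)]
  obtain ⟨k, rfl⟩ : ∃ k, q = k + 1 := ⟨q - 1, by omega⟩
  obtain ⟨m, rfl⟩ : ∃ m, n = m + 1 := ⟨n - 1, by omega⟩
  simp only [Nat.add_sub_cancel, Nat.succ_eq_add_one] at *
  nlinarith

/-- The covering radius of the repetition code of all constant words of length `n` over
`ZMod q` equals `⌊n(q-1)/q⌋`. -/
theorem covRad_repetition (q n : ℕ) (hq : 2 ≤ q) (hn : 1 ≤ n) :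
    covRad {w : Fin n → ZMod q | ∃ a : ZMod q, w = fun _ => a} = n * (q - 1) / q := by
  apply IsGreatest.csSup_eq
  constructor
  · refine ⟨fun i : Fin n => ((i : ℕ) : ZMod q), le_antisymm ?_ ?_⟩
    · refine le_csInf ⟨_, fun _ => 0, ⟨0, rfl⟩, rfl⟩ ?_
      rintro e ⟨c, ⟨a, rfl⟩, rfl⟩
      exact far_word hq hn a
    · obtain ⟨a, ha⟩ := exists_close hq (fun i : Fin n => ((i : ℕ) : ZMod q))
      refine le_trans (Nat.sInf_le ?_) ha
      exact ⟨_, ⟨a, rfl⟩, rfl⟩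
  · rintro r ⟨u, rfl⟩
    obtain ⟨a, ha⟩ := exists_close hq u
    refine le_trans (Nat.sInf_le ?_) ha
    exact ⟨_, ⟨a, rfl⟩, rfl⟩
end

section
/- Let q ≥ 2 be an even integer and n ≥ 1. Let w ∈ (Fin ((q-1)*n) → ZMod q) be the concatenation of the blocks (j, j, …, j) of length n for j = 1, 2, …, q-1, and let C = { a • w : a ∈ ZMod q }. Then C has exactly q elements and the minimum Hamming weight of the nonzero words of C equals (q/2)·n. -/
/-- `wrep q n` is the concatenation of the blocks `(j, j, …, j)` of length `n` for
`j = 1, 2, …, q-1`, a word of length `(q-1)·n` over `ZMod q`. -/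
def wrep (q n : ℕ) : Fin ((q - 1) * n) → ZMod q := fun i =>
  (((i : ℕ) / n + 1 : ℕ) : ZMod q)

open Classical in
theorem hwt_aux (q n : ℕ) [NeZero q] (hn : 1 ≤ n) (a : ZMod q) :
    hwt (a • wrep q n) = (Finset.univ.filter (fun x : ZMod q => a * x ≠ 0)).card * n := by
  have hqp : 0 < q := Nat.pos_of_ne_zero (NeZero.ne q)
  have h1 : hwt (a • wrep q n) =
      (Finset.univ.filter (fun i : Fin ((q-1)*n) => a * wrep q n i ≠ 0)).card := by
    unfold hwt
    rw [← Set.ncard_coe_finset]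
    congr 1
    ext i
    simp
  have hv : ∀ i : Fin ((q-1)*n), (wrep q n i).val = i.val / n + 1 := by
    intro i
    unfold wrep
    rw [ZMod.val_natCast, Nat.mod_eq_of_lt]
    have : i.val / n < q - 1 := Nat.div_lt_of_lt_mul (lt_of_lt_of_eq i.2 (mul_comm _ _))
    omega
  have h2 : (Finset.univ.filter (fun x : ZMod q => a * x ≠ 0)).card * n =
    ((Finset.univ.filter (fun x : ZMod q => a * x ≠ 0)) ×ˢ (Finset.range n)).card := by
    rw [Finset.card_product, Finset.card_range]
  rw [h1, h2]
  refine Finset.card_bij (fun i _ => (wrep q n i, i.val % n)) ?_ ?_ ?_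
  · intro i hi
    simp only [Finset.mem_filter, Finset.mem_univ, true_and] at hi
    simp only [Finset.mem_product, Finset.mem_filter, Finset.mem_univ, true_and, Finset.mem_range]
    exact ⟨hi, Nat.mod_lt _ hn⟩
  · intro i _ j _ h
    obtain ⟨h3, h4⟩ := Prod.mk.inj h
    have h5 := congrArg ZMod.val h3
    rw [hv, hv] at h5
    have h6 : i.val / n = j.val / n := by omega
    apply Fin.ext
    rw [← Nat.div_add_mod i.val n, ← Nat.div_add_mod j.val n, h6, h4]
  · rintro ⟨x, r⟩ h
    simp only [Finset.mem_product, Finset.mem_filter, Finset.mem_univ, true_and,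
      Finset.mem_range] at h
    obtain ⟨hx, hr⟩ := h
    have hx0 : x.val ≠ 0 := by
      intro h0
      rw [ZMod.val_eq_zero] at h0
      exact hx (by rw [h0, mul_zero])
    have hxq := ZMod.val_lt x
    have hlt : n * (x.val - 1) + r < (q-1)*n := by
      obtain ⟨k, hk⟩ := Nat.exists_eq_succ_of_ne_zero hx0
      have : k + 1 ≤ q - 1 := by omega
      rw [hk]
      simp only [Nat.succ_eq_add_one, Nat.add_sub_cancel]
      nlinarith [Nat.mul_le_mul_right n this]
    have hd : (n * (x.val - 1) + r) / n = x.val - 1 := by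
      rw [Nat.mul_add_div hn, Nat.div_eq_of_lt hr, add_zero]
    have hw : wrep q n ⟨n * (x.val - 1) + r, hlt⟩ = x := by
      apply ZMod.val_injective q
      rw [hv]
      simp only [hd]
      omega
    refine ⟨⟨n * (x.val - 1) + r, hlt⟩, ?_, ?_⟩
    · simp only [Finset.mem_filter, Finset.mem_univ, true_and]
      rw [hw]; exact hx
    · rw [hw]
      simp [Nat.mul_add_mod, Nat.mod_eq_of_lt hr]

open Classical in
theorem card_lower (q : ℕ) [NeZero q] (a : ZMod q) (ha : a ≠ 0) :
    q / 2 ≤ (Finset.univ.filter (fun x : ZMod q => a * x ≠ 0)).card := by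
  have h := Finset.card_filter_add_card_filter_not (s := (Finset.univ : Finset (ZMod q)))
    (fun x => a * x ≠ 0)
  rw [Finset.card_univ, ZMod.card] at h
  have : (Finset.univ.filter (fun x : ZMod q => ¬ (a * x ≠ 0))).card ≤
      (Finset.univ.filter (fun x : ZMod q => a * x ≠ 0)).card := by
    refine Finset.card_le_card_of_injOn (fun x => x + 1) ?_ ?_
    · intro x hx
      simp at hx ⊢
      rw [mul_add, hx]
      simpa using ha
    · intro x _ y _ h
      simpa using h
  omega

open Classical in
theorem card_upper (k : ℕ) [NeZero (k + k)] :
    (Finset.univ.filter (fun x : ZMod (k+k) => (k : ZMod (k+k)) * x ≠ 0)).card ≤ k := by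
  have h := Finset.card_filter_add_card_filter_not (s := (Finset.univ : Finset (ZMod (k+k))))
    (fun x => (k : ZMod (k+k)) * x ≠ 0)
  rw [Finset.card_univ, ZMod.card] at h
  have hkk : (k : ZMod (k+k)) + k = 0 := by
    rw [← Nat.cast_add, ZMod.natCast_self]
  have : (Finset.univ.filter (fun x : ZMod (k+k) => (k : ZMod (k+k)) * x ≠ 0)).card ≤
      (Finset.univ.filter (fun x : ZMod (k+k) => ¬ ((k : ZMod (k+k)) * x ≠ 0))).card := by
    refine Finset.card_le_card_of_injOn (fun x => x + 1) ?_ ?_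
    · intro x hx
      simp at hx ⊢
      rw [← ZMod.natCast_zmod_val x] at hx ⊢
      rcases Nat.even_or_odd' x.val with ⟨c, hc | hc⟩
      · exfalso
        apply hx
        rw [hc]
        push_cast
        linear_combination (c : ZMod (k+k)) * hkk
      · rw [hc]
        push_cast
        linear_combination ((c : ZMod (k+k)) + 1) * hkk
    · intro x _ y _ h
      simpa using h
  omega


/-- For even `q`, the code generated by the word `(1,…,1, 2,…,2, …, q-1,…,q-1)` (each block
of length `n`) has `q` codewords and minimum nonzero Hamming weight `(q/2)·n`. -/
theorem card_and_min_weight_wrep_code (q n : ℕ) (hq : 2 ≤ q) (hqe : Even q) (hn : 1 ≤ n) :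
    Set.ncard {w : Fin ((q - 1) * n) → ZMod q | ∃ a : ZMod q, w = a • wrep q n} = q ∧
      sInf {t | ∃ w ∈ {w : Fin ((q - 1) * n) → ZMod q | ∃ a : ZMod q, w = a • wrep q n},
          w ≠ (0 : Fin ((q - 1) * n) → ZMod q) ∧ t = hwt w} = (q / 2) * n := by
  have : NeZero q := ⟨by omega⟩
  have hpos : 0 < (q - 1) * n := Nat.mul_pos (by omega) hn
  have hinj : Function.Injective (fun a : ZMod q => a • wrep q n) := by
    intro a b h
    have h0 := congrFun h ⟨0, hpos⟩
    simpa [wrep] using h0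
  constructor
  · have : {w : Fin ((q - 1) * n) → ZMod q | ∃ a : ZMod q, w = a • wrep q n} =
        (fun a : ZMod q => a • wrep q n) '' Set.univ := by
      ext w
      simp [eq_comm]
    rw [this, Set.ncard_image_of_injective _ hinj, Set.ncard_univ, Nat.card_zmod]
  · have hne : ∀ a : ZMod q, a ≠ 0 → a • wrep q n ≠ 0 := by
      intro a ha h
      exact ha (hinj (by simpa using h))
    have hl : ∀ t ∈ {t | ∃ w ∈ {w : Fin ((q - 1) * n) → ZMod q | ∃ a : ZMod q, w = a • wrep q n},
          w ≠ (0 : Fin ((q - 1) * n) → ZMod q) ∧ t = hwt w}, (q / 2) * n ≤ t := by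
      rintro t ⟨w, ⟨a, rfl⟩, hw, rfl⟩
      rw [hwt_aux q n hn a]
      refine Nat.mul_le_mul_right n (card_lower q a ?_)
      rintro rfl
      exact hw (by simp)
    have hk0 : ((q / 2 : ℕ) : ZMod q) ≠ 0 := by
      intro h
      rw [ZMod.natCast_eq_zero_iff] at h
      have := Nat.le_of_dvd (by omega) h
      omega
    have hm : (q / 2) * n ∈
        {t | ∃ w ∈ {w : Fin ((q - 1) * n) → ZMod q | ∃ a : ZMod q, w = a • wrep q n},
          w ≠ (0 : Fin ((q - 1) * n) → ZMod q) ∧ t = hwt w} := by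
      refine ⟨((q / 2 : ℕ) : ZMod q) • wrep q n, ⟨_, rfl⟩, hne _ hk0, ?_⟩
      rw [hwt_aux q n hn]
      congr 1
      apply le_antisymm (card_lower q _ hk0)
      obtain ⟨k, rfl⟩ := hqe
      have : (k + k) / 2 = k := by omega
      rw [this]
      exact card_upper k
    exact le_antisymm (Nat.sInf_le hm) (hl _ (Nat.sInf_mem ⟨_, hm⟩))
end

section
/- Let q ≥ 2 be an even integer and n ≥ 1. Let w ∈ (Fin ((q-1)*n) → ZMod q) be the concatenation of the blocks (j, j, …, j) of length n for j = 1, 2, …, q-1, and let C = { a • w : a ∈ ZMod q }. Then the covering radius of C equals ⌊(q-1)·φ(q)·n/q⌋ + (q-1-φ(q))·n, where φ is Euler's totient function. -/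
open Classical in
lemma aux_hdist {q m : ℕ} (u c : Fin m → ZMod q) :
    hdist u c + (Finset.univ.filter (fun i => u i = c i)).card = m := by
  have h1 : hdist u c = (Finset.univ.filter (fun i => ¬ u i = c i)).card := by
    unfold hdist
    rw [← Set.ncard_coe_finset]
    congr 1
    ext i
    simp
  rw [h1, add_comm, Finset.card_filter_add_card_filter_not]
  simp

open Classical in
lemma aux_units (q n : ℕ) (hq : 2 ≤ q) :
    (Finset.univ.filter (fun i => IsUnit (wrep q n i))).card = Nat.totient q * n := by
  have hb : ∀ i, IsUnit (wrep q n i) ↔ Nat.Coprime q ((i : ℕ) / n + 1) := by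
    intro i
    unfold wrep
    rw [ZMod.isUnit_iff_coprime, Nat.coprime_comm]
  simp only [hb]
  rw [Finset.card_filter, ← finProdFinEquiv.sum_comp, Fintype.sum_prod_type]
  have : ∀ (x : Fin (q-1)) (y : Fin n),
      ((finProdFinEquiv (x, y) : Fin ((q-1)*n)) : ℕ) / n = x := by
    intro x y
    have := y.2
    rw [finProdFinEquiv_apply_val]
    simp only
    rw [Nat.add_mul_div_left _ _ (by omega), Nat.div_eq_of_lt this, zero_add]
  simp only [this]
  simp only [Finset.sum_const, Finset.card_univ, Fintype.card_fin, smul_eq_mul]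
  rw [← Finset.mul_sum, mul_comm]
  congr 1
  rw [Fin.sum_univ_eq_sum_range (fun x => if Nat.Coprime q (x+1) then 1 else 0)]
  rw [Nat.totient_eq_card_coprime, Finset.card_filter]
  obtain ⟨k, rfl⟩ : ∃ k, q = k + 1 := ⟨q - 1, by omega⟩
  rw [Finset.sum_range_succ']
  have : ¬ Nat.Coprime (k+1) 0 := by
    rw [Nat.coprime_zero_right]; omega
  simp [this]

lemma aux_div (q P : ℕ) (hq : 2 ≤ q) : (q * P - P) / q + (P + q - 1) / q = P := by
  obtain ⟨k, rfl⟩ : ∃ k, q = k + 1 := ⟨q - 1, by omega⟩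
  have h1 := Nat.div_add_mod ((k+1) * P - P) (k+1)
  have h2 := Nat.div_add_mod (P + (k + 1) - 1) (k+1)
  have h3 := Nat.mod_lt ((k+1) * P - P) (show 0 < k+1 by omega)
  have h4 := Nat.mod_lt (P + (k + 1) - 1) (show 0 < k+1 by omega)
  generalize ((k+1) * P - P) / (k+1) = A at *
  generalize (P + (k + 1) - 1) / (k+1) = B at *
  have h5 : P ≤ (k+1) * P := by nlinarith
  have e : (k+1) * (A + B) = (k+1) * A + (k+1) * B := by ring
  by_contra hne
  rcases Nat.lt_or_gt_of_ne hne with h | h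
  · have : (k+1) * (A + B + 1) ≤ (k+1) * P := Nat.mul_le_mul_left _ h
    have e2 : (k+1) * (A + B + 1) = (k+1) * (A + B) + (k+1) := by ring
    omega
  · have : (k+1) * (P + 1) ≤ (k+1) * (A + B) := Nat.mul_le_mul_left _ h
    have e2 : (k+1) * (P + 1) = (k+1) * P + (k+1) := by ring
    omega

open Classical in
lemma aux_upper (q n : ℕ) (hq : 2 ≤ q) (u : Fin ((q-1)*n) → ZMod q) :
    ∃ a : ZMod q, Nat.totient q * n ≤
      q * (Finset.univ.filter (fun i => u i = (a • wrep q n) i)).card := by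
  haveI : NeZero q := ⟨by omega⟩
  by_contra! hc
  have h1 : ∑ a : ZMod q, q * (Finset.univ.filter (fun i => u i = (a • wrep q n) i)).card
      < ∑ a : ZMod q, Nat.totient q * n :=
    Finset.sum_lt_sum_of_nonempty Finset.univ_nonempty (fun a _ => hc a)
  rw [← Finset.mul_sum] at h1
  simp only [Finset.sum_const, Finset.card_univ, ZMod.card, smul_eq_mul] at h1
  have h2 := lt_of_mul_lt_mul_left h1 (Nat.zero_le q)
  apply absurd h2
  rw [not_lt, ← aux_units q n hq]
  simp only [Finset.card_filter]
  rw [Finset.sum_comm]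
  apply Finset.sum_le_sum
  intro i _
  split_ifs with hu
  · obtain ⟨b, hb⟩ := hu.exists_left_inv
    calc 1 = (if u i = ((u i * b) • wrep q n) i then 1 else 0) := by
            simp [mul_assoc, hb]
      _ ≤ _ := Finset.single_le_sum
            (f := fun a : ZMod q => if u i = (a • wrep q n) i then 1 else 0)
            (fun _ _ => Nat.zero_le _) (Finset.mem_univ (u i * b))
  · exact Nat.zero_le _

open Classical in
lemma aux_lower (q n : ℕ) (hq : 2 ≤ q) : ∃ u : Fin ((q-1)*n) → ZMod q,
    ∀ a : ZMod q, (Finset.univ.filter (fun i => u i = (a • wrep q n) i)).card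
      ≤ (Nat.totient q * n + q - 1) / q := by
  set P := Nat.totient q * n with hP
  obtain ⟨U, hUm, hU⟩ : ∃ U : Finset (Fin ((q-1)*n)),
      (∀ i, i ∈ U ↔ IsUnit (wrep q n i)) ∧ U.card = P :=
    ⟨_, fun i => by rw [Finset.mem_filter]; simp, aux_units q n hq⟩
  have : NeZero q := ⟨by omega⟩
  let e : U ≃ Fin P := U.equivFinOfCardEq hU
  let g : Fin ((q-1)*n) → ℕ := fun i => if h : i ∈ U then (e ⟨i, h⟩ : ℕ) else 0
  refine ⟨fun i => if i ∈ U then (g i : ZMod q) * wrep q n i else 1, fun a => ?_⟩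
  have key : (Finset.univ.filter (fun i => (if i ∈ U then (g i : ZMod q) * wrep q n i else 1)
      = (a • wrep q n) i)).card ≤ ((Finset.range P).filter (· ≡ a.val [MOD q])).card := by
    have hm : ∀ i, (if i ∈ U then (g i : ZMod q) * wrep q n i else 1) = (a • wrep q n) i →
        i ∈ U ∧ (g i : ZMod q) = a := by
      intro i hi
      by_cases hiU : i ∈ U
      · refine ⟨hiU, ?_⟩
        rw [if_pos hiU] at hi
        have hu : IsUnit (wrep q n i) := (hUm i).mp hiU
        exact hu.mul_right_cancel hi
      · rw [if_neg hiU] at hi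
        exfalso
        apply hiU
        rw [hUm]
        exact IsUnit.of_mul_eq_one a (by rw [mul_comm]; exact hi.symm)
    apply Finset.card_le_card_of_injOn g
    · intro i hi
      obtain ⟨h1, h2⟩ := hm i (by simpa using hi)
      have : g i < P := by simp only [g, dif_pos h1]; exact (e ⟨i, h1⟩).2
      simp only [Finset.coe_filter, Finset.mem_range, Set.mem_setOf_eq]
      refine ⟨this, ?_⟩
      rw [← ZMod.natCast_eq_natCast_iff, h2, ZMod.natCast_zmod_val]
    · intro i hi j hj hij
      obtain ⟨h1, -⟩ := hm i (by simpa using hi)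
      obtain ⟨h2, -⟩ := hm j (by simpa using hj)
      simp only [g, dif_pos h1, dif_pos h2] at hij
      have := e.injective (Fin.ext hij)
      exact congrArg Subtype.val this
  refine key.trans ?_
  rw [← Nat.count_eq_card_filter_range, Nat.count_modEq_card _ (by omega)]
  rw [Nat.le_div_iff_mul_le (by omega)]
  have h1 := Nat.div_add_mod P q
  split_ifs with h
  · have : (P / q + 1) * q = q * (P / q) + q := by ring
    omega
  · have : (P / q + 0) * q = q * (P / q) := by ring
    omega

/-- For even `q`, the covering radius of the code generated by the word
`(1,…,1, 2,…,2, …, q-1,…,q-1)` (each block of length `n`) equals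
`⌊(q-1)·φ(q)·n/q⌋ + (q-1-φ(q))·n`. -/
theorem covRad_wrep_code (q n : ℕ) (hq : 2 ≤ q) (hqe : Even q) (hn : 1 ≤ n) :
    covRad {w : Fin ((q - 1) * n) → ZMod q | ∃ a : ZMod q, w = a • wrep q n} =
      (q - 1) * Nat.totient q * n / q + (q - 1 - Nat.totient q) * n := by
  classical
  set P := Nat.totient q * n with hP
  have hφ : Nat.totient q ≤ q - 1 := by
    have := Nat.totient_lt q (by omega); omega
  have hPm : P ≤ (q - 1) * n := Nat.mul_le_mul_right _ hφ
  have e1 : (q - 1) * Nat.totient q * n = q * P - P := by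
    rw [mul_assoc, Nat.sub_mul, one_mul]
  have e2 : (q - 1 - Nat.totient q) * n = (q - 1) * n - P := by
    rw [Nat.sub_mul]
  rw [e1, e2]
  have hd := aux_div q P hq
  have hB : (q * P - P) / q + ((q - 1) * n - P) + (P + q - 1) / q = (q - 1) * n := by omega
  set B := (q * P - P) / q + ((q - 1) * n - P) with hBdef
  have hle : ∀ u : Fin ((q-1)*n) → ZMod q, sInf {e | ∃ c ∈ {w : Fin ((q - 1) * n) → ZMod q |
      ∃ a : ZMod q, w = a • wrep q n}, e = hdist u c} ≤ B := by
    intro u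
    obtain ⟨a, ha⟩ := aux_upper q n hq u
    have h1 := aux_hdist u (a • wrep q n)
    have hmem : hdist u (a • wrep q n) ∈ {e | ∃ c ∈ {w : Fin ((q - 1) * n) → ZMod q |
      ∃ a : ZMod q, w = a • wrep q n}, e = hdist u c} := ⟨a • wrep q n, ⟨a, rfl⟩, rfl⟩
    refine (Nat.sInf_le hmem).trans ?_
    generalize (Finset.univ.filter (fun i => u i = (a • wrep q n) i)).card = g at ha h1
    have : (P + q - 1) / q ≤ g := by
      rw [← Nat.lt_succ_iff, Nat.div_lt_iff_lt_mul (by omega)]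
      have : g.succ * q = q * g + q := by rw [Nat.succ_mul, mul_comm]
      omega
    omega
  unfold covRad
  apply le_antisymm
  · refine csSup_le ⟨_, ⟨0, rfl⟩⟩ ?_
    rintro r ⟨u, rfl⟩
    exact hle u
  · obtain ⟨u, hu⟩ := aux_lower q n hq
    refine le_csSup_of_le ⟨B, ?_⟩ ⟨u, rfl⟩ ?_
    · rintro r ⟨u, rfl⟩
      exact hle u
    · refine le_csInf ⟨_, ⟨(0 : ZMod q) • wrep q n, ⟨0, rfl⟩, rfl⟩⟩ ?_
      rintro e ⟨c, ⟨a, rfl⟩, rfl⟩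
      have h1 := aux_hdist u (a • wrep q n)
      have h2 := hu a
      rw [← hP] at h2
      omega
end

section
/- Let q ≥ 1 and let G0 be a k0 × n0 matrix, G1 a k1 × n1 matrix, and A a k0 × n1 matrix, all over ZMod q. Let C0 = { x ᵥ* G0 : x ∈ Fin k0 → ZMod q } ⊆ (Fin n0 → ZMod q), C1 = { y ᵥ* G1 : y ∈ Fin k1 → ZMod q } ⊆ (Fin n1 → ZMod q), and let C ⊆ (Fin (n0+n1) → ZMod q) be the code generated by the block matrix [[0, G1],[G0, A]], that is, C = { Fin.append (x ᵥ* G0) (y ᵥ* G1 + x ᵥ* A) : x ∈ Fin k0 → ZMod q, y ∈ Fin k1 → ZMod q }. Then R(C) ≤ R(C0) + R(C1). -/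
open Matrix

theorem exists_hdist_le_covRad {q : ℕ} {I : Type*} [Finite I] (C : Set (I → ZMod q))
    (hC : C.Nonempty) (u : I → ZMod q) : ∃ c ∈ C, hdist u c ≤ covRad C := by
  have hne : ∀ v : I → ZMod q, {e | ∃ c ∈ C, e = hdist v c}.Nonempty := by
    intro v
    obtain ⟨c, hc⟩ := hC
    exact ⟨_, c, hc, rfl⟩
  obtain ⟨c, hc, h⟩ := Nat.sInf_mem (hne u)
  refine ⟨c, hc, ?_⟩
  rw [← h]
  refine le_csSup ⟨Nat.card I, ?_⟩ ⟨u, rfl⟩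
  rintro r ⟨v, rfl⟩
  obtain ⟨c, hc, h⟩ := Nat.sInf_mem (hne v)
  rw [h]
  unfold hdist
  rw [← Set.ncard_univ]
  exact Set.ncard_le_ncard (Set.subset_univ _) Set.finite_univ

theorem hdist_append_le {q n0 n1 : ℕ} (u : Fin (n0 + n1) → ZMod q) (a : Fin n0 → ZMod q)
    (b : Fin n1 → ZMod q) : hdist u (Fin.append a b) ≤
      hdist (fun i => u (Fin.castAdd n1 i)) a + hdist (fun i => u (Fin.natAdd n0 i)) b := by
  unfold hdist
  have hs : {i | u i ≠ Fin.append a b i} ⊆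
      (Fin.castAdd n1 '' {i | u (Fin.castAdd n1 i) ≠ a i}) ∪
      (Fin.natAdd n0 '' {i | u (Fin.natAdd n0 i) ≠ b i}) := by
    intro i
    refine Fin.addCases (fun i hi => ?_) (fun i hi => ?_) i
    · left
      exact ⟨i, by simpa using hi, rfl⟩
    · right
      exact ⟨i, by simpa using hi, rfl⟩
  refine (Set.ncard_le_ncard hs (Set.toFinite _)).trans ((Set.ncard_union_le _ _).trans ?_)
  exact add_le_add (Set.ncard_image_le (Set.toFinite _)) (Set.ncard_image_le (Set.toFinite _))

/-- If `C₀`, `C₁` are the codes generated by matrices `G₀`, `G₁` and `C` is the code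
generated by the block matrix `[[0, G₁], [G₀, A]]`, then `R(C) ≤ R(C₀) + R(C₁)`. -/
theorem covRad_block_le (q k0 k1 n0 n1 : ℕ) (hq : 1 ≤ q)
    (G0 : Matrix (Fin k0) (Fin n0) (ZMod q)) (G1 : Matrix (Fin k1) (Fin n1) (ZMod q))
    (A : Matrix (Fin k0) (Fin n1) (ZMod q)) :
    covRad {w : Fin (n0 + n1) → ZMod q |
        ∃ x : Fin k0 → ZMod q, ∃ y : Fin k1 → ZMod q,
          w = Fin.append (x ᵥ* G0) (y ᵥ* G1 + x ᵥ* A)} ≤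
      covRad {w : Fin n0 → ZMod q | ∃ x : Fin k0 → ZMod q, w = x ᵥ* G0} +
        covRad {w : Fin n1 → ZMod q | ∃ y : Fin k1 → ZMod q, w = y ᵥ* G1} := by
  refine csSup_le ⟨_, 0, rfl⟩ ?_
  rintro r ⟨u, rfl⟩
  obtain ⟨_, ⟨x, rfl⟩, hx⟩ := exists_hdist_le_covRad
    {w : Fin n0 → ZMod q | ∃ x : Fin k0 → ZMod q, w = x ᵥ* G0} ⟨_, 0, rfl⟩
    (fun i => u (Fin.castAdd n1 i))
  obtain ⟨_, ⟨y, rfl⟩, hy⟩ := exists_hdist_le_covRad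
    {w : Fin n1 → ZMod q | ∃ y : Fin k1 → ZMod q, w = y ᵥ* G1} ⟨_, 0, rfl⟩
    ((fun i => u (Fin.natAdd n0 i)) - x ᵥ* A)
  refine le_trans (Nat.sInf_le (m := hdist u (Fin.append (x ᵥ* G0) (y ᵥ* G1 + x ᵥ* A)))
    ⟨_, ⟨x, y, rfl⟩, rfl⟩) ((hdist_append_le _ _ _).trans ?_)
  refine add_le_add hx (le_trans (le_of_eq ?_) hy)
  unfold hdist
  congr 1
  ext i
  simp [sub_eq_iff_eq_add]
end

section
/- Let q ≥ 2 be an even integer and let k ≥ 2. Then, as an inequality of real numbers, R(S_{k+1}(q)) ≤ ((k-1)·(q-1)·φ(q) + (q² - q - φ(q))·(q^{k+1} - q²))/(q·(q-1)²) + R(S_2(q)), where R denotes the covering radius and φ is Euler's totient function. -/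
theorem snoc_zero_mem {q k : ℕ} {v : Fin k → ZMod q} (hv : v ∈ Vset q k) :
    (Fin.snoc v 0 : Fin (k + 1) → ZMod q) ∈ Vset q (k + 1) := by
  obtain ⟨_, m, hm0, hm, hm1⟩ := hv
  refine ⟨fun h => hm0 ?_, m.castSucc, ?_, ?_, ?_⟩
  · have := congrFun h m.castSucc
    simpa using this
  · simpa using hm0
  · intro i
    refine Fin.lastCases ?_ (fun j => ?_) i
    · intro _; simp
    · intro hj
      simpa using hm j (by simpa using hj)
  · simpa using hm1

theorem snoc_one_mem {q k : ℕ} (h : (1 : ZMod q) ≠ 0) (x : Fin k → ZMod q) :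
    (Fin.snoc x 1 : Fin (k + 1) → ZMod q) ∈ Vset q (k + 1) := by
  refine ⟨fun h' => h ?_, Fin.last k, ?_, ?_, ?_⟩
  · have := congrFun h' (Fin.last k)
    simpa using this
  · simpa using h
  · intro i hi
    exact absurd (Fin.le_last i) (not_le.mpr hi)
  · simp

theorem mem_succ_cases {q k : ℕ} {v : Fin (k + 1) → ZMod q} (hv : v ∈ Vset q (k + 1)) :
    (∃ x ∈ Vset q k, v = Fin.snoc x 0) ∨ ∃ x : Fin k → ZMod q, v = Fin.snoc x 1 := by
  obtain ⟨_, m, hm0, hm, hm1⟩ := hv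
  revert hm0 hm hm1
  refine Fin.lastCases ?_ (fun j => ?_) m
  · intro _ _ h1
    right
    refine ⟨Fin.init v, ?_⟩
    rw [← h1, Fin.snoc_init_self]
  · intro h0 hm h1
    left
    refine ⟨Fin.init v, ⟨fun h => h0 (congrFun h j), j, h0, ?_, h1⟩, ?_⟩
    · intro i hi
      exact hm i.castSucc (by simpa using hi)
    · rw [← hm (Fin.last k) (Fin.castSucc_lt_last j), Fin.snoc_init_self]

theorem hdist_le_card {q : ℕ} {I : Type*} [Finite I] (x y : I → ZMod q) :
    hdist x y ≤ Nat.card I := by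
  unfold hdist
  rw [← Set.ncard_univ]
  exact Set.ncard_le_ncard (Set.subset_univ _)

theorem exists_le_covRad {q k : ℕ} [NeZero q] (u : Vset q k → ZMod q) :
    ∃ w : Fin k → ZMod q,
      hdist u (fun v : Vset q k => ∑ i, w i * v.1 i) ≤ covRad (SimplexCode q k) := by
  have hne : {e | ∃ c ∈ SimplexCode q k, e = hdist u c}.Nonempty :=
    ⟨_, _, ⟨0, rfl⟩, rfl⟩
  obtain ⟨c, ⟨w, rfl⟩, hc⟩ := Nat.sInf_mem hne
  refine ⟨w, ?_⟩
  rw [← hc]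
  refine le_csSup ⟨Nat.card (Vset q k), ?_⟩ ⟨u, rfl⟩
  rintro r ⟨u', rfl⟩
  refine le_trans (Nat.sInf_le ?_) (hdist_le_card u' (fun v : Vset q k => ∑ i, (0 : Fin k → ZMod q) i * v.1 i))
  exact ⟨_, ⟨0, rfl⟩, rfl⟩

theorem covRad_step (q k : ℕ) (hq : 2 ≤ q) :
    covRad (SimplexCode q (k + 2)) + q ^ k ≤ covRad (SimplexCode q (k + 1)) + q ^ (k + 1) := by
  have : NeZero q := ⟨by omega⟩
  have : Fact (1 < q) := ⟨by omega⟩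
  have h10 : (1 : ZMod q) ≠ 0 := one_ne_zero
  have hle : q ^ k ≤ q ^ (k + 1) := Nat.pow_le_pow_right (by omega) (by omega)
  suffices covRad (SimplexCode q (k + 2)) ≤
      covRad (SimplexCode q (k + 1)) + (q ^ (k + 1) - q ^ k) by omega
  refine csSup_le ⟨_, 0, rfl⟩ ?_
  rintro r ⟨u, rfl⟩
  let f0 : Vset q (k + 1) → Vset q (k + 2) := fun v => ⟨Fin.snoc v.1 0, snoc_zero_mem v.2⟩
  let f1 : (Fin (k + 1) → ZMod q) → Vset q (k + 2) := fun x => ⟨Fin.snoc x 1, snoc_one_mem h10 x⟩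
  obtain ⟨w, hw⟩ := exists_le_covRad (fun v => u (f0 v))
  obtain ⟨t, -, ht⟩ := Finset.exists_le_card_fiber_of_mul_le_card_of_maps_to
    (s := (Finset.univ : Finset (Fin (k + 1) → ZMod q))) (t := (Finset.univ : Finset (ZMod q)))
    (f := fun x => u (f1 x) - ∑ i, w i * x i) (n := q ^ k)
    (fun _ _ => Finset.mem_univ _) ⟨0, Finset.mem_univ _⟩
    (by simp [ZMod.card, pow_succ, mul_comm])
  have hmem : hdist u (fun v : Vset q (k + 2) =>
      ∑ i, (Fin.snoc w t : Fin (k + 2) → ZMod q) i * v.1 i) ∈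
      {e | ∃ c ∈ SimplexCode q (k + 2), e = hdist u c} := ⟨_, ⟨Fin.snoc w t, rfl⟩, rfl⟩
  refine (Nat.sInf_le hmem).trans ?_
  set A := {v : Vset q (k + 1) | u (f0 v) ≠ ∑ i, w i * v.1 i} with hA
  set B := {x : Fin (k + 1) → ZMod q | ¬ (u (f1 x) - ∑ i, w i * x i = t)} with hB
  have hBc : B.ncard ≤ q ^ (k + 1) - q ^ k := by
    have h1 := Finset.card_filter_add_card_filter_not
      (s := (Finset.univ : Finset (Fin (k + 1) → ZMod q)))
      (fun x => u (f1 x) - ∑ i, w i * x i = t)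
    have h2 : B.ncard = (Finset.univ.filter
        (fun x : Fin (k + 1) → ZMod q => ¬ (u (f1 x) - ∑ i, w i * x i = t))).card := by
      rw [← Set.ncard_coe_finset]; simp [hB]
    have h3 : (Finset.univ : Finset (Fin (k + 1) → ZMod q)).card = q ^ (k + 1) := by
      simp [ZMod.card]
    omega
  have hsub : {v : Vset q (k + 2) | u v ≠ ∑ i, (Fin.snoc w t : Fin (k + 2) → ZMod q) i * v.1 i} ⊆
      f0 '' A ∪ f1 '' B := by
    rintro ⟨v, hv⟩ hne
    rcases mem_succ_cases hv with ⟨x, hx, rfl⟩ | ⟨x, rfl⟩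
    · left
      refine ⟨⟨x, hx⟩, fun h => hne ?_, rfl⟩
      rw [Fin.sum_univ_castSucc]
      simpa using h
    · right
      refine ⟨x, fun h => hne ?_, rfl⟩
      rw [Fin.sum_univ_castSucc]
      have h' := sub_eq_iff_eq_add'.mp h
      simpa using h'
  calc _ ≤ (f0 '' A ∪ f1 '' B).ncard := Set.ncard_le_ncard hsub
    _ ≤ (f0 '' A).ncard + (f1 '' B).ncard := Set.ncard_union_le _ _
    _ ≤ A.ncard + B.ncard := add_le_add (Set.ncard_image_le) (Set.ncard_image_le)
    _ ≤ _ := add_le_add hw hBc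

theorem covRad_iter (q n : ℕ) (hq : 2 ≤ q) :
    (covRad (SimplexCode q (n + 2)) : ℝ) ≤
      ((n : ℝ) * ((q : ℝ) - 1) * (Nat.totient q : ℝ) +
          ((q : ℝ) ^ 2 - (q : ℝ) - (Nat.totient q : ℝ)) *
            ((q : ℝ) ^ (n + 2) - (q : ℝ) ^ 2)) /
        ((q : ℝ) * ((q : ℝ) - 1) ^ 2) +
      (covRad (SimplexCode q 2) : ℝ) := by
  have hq' : (2 : ℝ) ≤ q := by exact_mod_cast hq
  have hq1 : (0 : ℝ) < (q : ℝ) - 1 := by linarith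
  have hq0 : (0 : ℝ) < (q : ℝ) := by linarith
  induction n with
  | zero => simp
  | succ n ih =>
    have hs : (covRad (SimplexCode q (n + 1 + 2)) : ℝ) + (q : ℝ) ^ (n + 1) ≤
        covRad (SimplexCode q (n + 2)) + (q : ℝ) ^ (n + 2) := by
      exact_mod_cast covRad_step q (n + 1) hq
    have hphi : (Nat.totient q : ℝ) ≤ (q : ℝ) - 1 := by
      have : Nat.totient q + 1 ≤ q := Nat.totient_lt q (by omega)
      have : ((Nat.totient q : ℝ)) + 1 ≤ q := by exact_mod_cast this
      linarith
    have hphi0 : (0 : ℝ) ≤ Nat.totient q := Nat.cast_nonneg _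
    generalize (Nat.totient q : ℝ) = p at *
    have hP : (1 : ℝ) ≤ (q : ℝ) ^ (n + 2) := one_le_pow₀ (by linarith)
    have hPe : (q : ℝ) ^ (n + 2) = q * (q : ℝ) ^ (n + 1) := by ring
    have hkey : (((n + 1 : ℕ) : ℝ) * ((q : ℝ) - 1) * p + ((q : ℝ) ^ 2 - q - p) *
          ((q : ℝ) ^ (n + 1 + 2) - (q : ℝ) ^ 2)) / ((q : ℝ) * ((q : ℝ) - 1) ^ 2) =
        ((n : ℝ) * ((q : ℝ) - 1) * p + ((q : ℝ) ^ 2 - q - p) *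
          ((q : ℝ) ^ (n + 2) - (q : ℝ) ^ 2)) / ((q : ℝ) * ((q : ℝ) - 1) ^ 2) +
        ((q : ℝ) ^ (n + 2) - p * ((q : ℝ) ^ (n + 2) - 1) / (q * ((q : ℝ) - 1))) := by
      have := hq1.ne'
      push_cast
      field_simp
      ring
    have hb : p * ((q : ℝ) ^ (n + 2) - 1) / (q * ((q : ℝ) - 1)) ≤ (q : ℝ) ^ (n + 1) := by
      rw [div_le_iff₀ (by positivity)]
      have : p * ((q : ℝ) ^ (n + 2) - 1) ≤ ((q : ℝ) - 1) * ((q : ℝ) ^ (n + 2) - 1) :=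
        mul_le_mul_of_nonneg_right hphi (by linarith)
      have e : (q : ℝ) ^ (n + 1) * (q * ((q : ℝ) - 1)) = ((q : ℝ) - 1) * (q : ℝ) ^ (n + 2) := by
        ring
      rw [e]
      linarith
    rw [hkey]
    linarith

/-- For even `q` and `k ≥ 2`, the covering radius of the `ZMod q`-Simplex code satisfies
`R(S_{k+1}) ≤ ((k-1)(q-1)φ(q) + (q²-q-φ(q))(q^{k+1}-q²))/(q(q-1)²) + R(S₂)`. -/
theorem covRad_simplex_le (q k : ℕ) (hq : 2 ≤ q) (hqe : Even q) (hk : 2 ≤ k) :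
    (covRad (SimplexCode q (k + 1)) : ℝ) ≤
      (((k : ℝ) - 1) * ((q : ℝ) - 1) * (Nat.totient q : ℝ) +
          ((q : ℝ) ^ 2 - (q : ℝ) - (Nat.totient q : ℝ)) *
            ((q : ℝ) ^ (k + 1) - (q : ℝ) ^ 2)) /
        ((q : ℝ) * ((q : ℝ) - 1) ^ 2) +
      (covRad (SimplexCode q 2) : ℝ) := by
  obtain ⟨n, rfl⟩ : ∃ n, k = n + 1 := ⟨k - 1, by omega⟩
  have h := covRad_iter q n hq
  have e : (((n + 1 : ℕ) : ℝ) - 1) = n := by push_cast; ring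
  rw [e]
  exact h
end

section
/- The covering radius of the Z_4-Simplex code S_2(4) equals 3. (Here S_2(4) has length 5, since V_2 has 5 elements when q = 4.) -/
def colP : Fin 5 → Fin 2 → ZMod 4 := ![![1,0],![0,1],![1,1],![2,1],![3,1]]

theorem colP_mem : ∀ j, colP j ∈ Vset 4 2 := by
  unfold Vset
  simp only [Set.mem_ofPred_eq]
  decide

theorem colP_inj : ∀ i j, colP i = colP j → i = j := by decide

theorem colP_surj' : ∀ a b : ZMod 4, (![a,b] ≠ 0 ∧ ∃ m : Fin 2, ![a,b] m ≠ 0 ∧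
    (∀ i, m < i → ![a,b] i = 0) ∧ ![a,b] m = 1) → ∃ j, colP j = ![a,b] := by decide

noncomputable def colE : Fin 5 ≃ ↥(Vset 4 2) :=
  Equiv.ofBijective (fun j => ⟨colP j, colP_mem j⟩) (by
    constructor
    · intro i j h
      exact colP_inj i j (congrArg Subtype.val h)
    · rintro ⟨v, hv⟩
      have e : v = ![v 0, v 1] := by
        ext i; fin_cases i <;> rfl
      obtain ⟨j, hj⟩ := colP_surj' (v 0) (v 1) (by rw [← e]; exact hv)
      exact ⟨j, Subtype.ext (hj.trans e.symm)⟩)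

theorem colE_val (j : Fin 5) : (colE j).1 = colP j := rfl

theorem hdist_eq (x y : ↥(Vset 4 2) → ZMod 4) :
    hdist x y = (Finset.univ.filter (fun j => x (colE j) ≠ y (colE j))).card := by
  unfold hdist
  rw [← Set.ncard_coe_finset, ← Set.ncard_image_of_injective _ colE.injective]
  congr 1
  ext i
  obtain ⟨j, rfl⟩ := colE.surjective i
  simp

def badW : Fin 5 → ZMod 4 := ![0,0,1,3,2]

theorem bad_far : ∀ a b : ZMod 4, 3 ≤ (Finset.univ.filter
    (fun j => badW j ≠ a * colP j 0 + b * colP j 1)).card := by decide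

theorem covRad_simplex_two_four : covRad (SimplexCode 4 2) = 3 ∧ (Vset 4 2).ncard = 5 := by
  constructor
  · have up : ∀ u : ↥(Vset 4 2) → ZMod 4,
        sInf {e | ∃ c ∈ SimplexCode 4 2, e = hdist u c} ≤ 3 := by
      intro u
      have hm : hdist u (fun v : ↥(Vset 4 2) => ∑ i, ![u (colE 0), u (colE 1)] i * v.1 i) ∈
          {e | ∃ c ∈ SimplexCode 4 2, e = hdist u c} :=
        ⟨_, ⟨![u (colE 0), u (colE 1)], rfl⟩, rfl⟩
      refine (Nat.sInf_le hm).trans ?_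
      rw [hdist_eq]
      have : (Finset.univ.filter (fun j : Fin 5 => u (colE j) ≠
          ∑ i, ![u (colE 0), u (colE 1)] i * (colE j).1 i)) ⊆ {2, 3, 4} := by
        intro j hj
        rw [Finset.mem_filter] at hj
        have hj := hj.2
        simp only [colE_val, Fin.sum_univ_two] at hj
        fin_cases j
        · exact absurd (by simp [colP]) hj
        · exact absurd (by simp [colP]) hj
        all_goals decide
      exact Finset.card_le_card this
    apply le_antisymm
    · refine csSup_le (Set.nonempty_of_mem (x := _) ⟨0, rfl⟩) ?_
      rintro r ⟨u, rfl⟩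
      exact up u
    · refine le_trans ?_ (le_csSup ⟨3, ?_⟩ ⟨fun v => badW (colE.symm v), rfl⟩)
      · refine le_csInf (Set.nonempty_of_mem (x := _) ⟨_, ⟨0, rfl⟩, rfl⟩) ?_
        rintro e ⟨c, ⟨u, rfl⟩, rfl⟩
        rw [hdist_eq]
        simp only [Fin.sum_univ_two, colE_val, Equiv.symm_apply_apply]
        exact bad_far (u 0) (u 1)
      · rintro r ⟨u, rfl⟩
        exact up u
  · rw [← Nat.card_coe_set_eq, ← Nat.card_congr colE]
    simp
end

section
/- Let k ≥ 2. Then, as an inequality of real numbers, the covering radius of the Z_4-Simplex code satisfies R(S_{k+1}(4)) ≤ (5·4^{k+1} + 3k - 29)/18. -/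
open Classical in
theorem aux_card (K : ℕ) : 3 * Fintype.card ↥(Vset 4 K) ≤ 4 ^ K := by
  have hm : ∀ v : ↥(Vset 4 K), ∃ m : Fin K, (∀ i, m < i → v.1 i = 0) ∧ v.1 m = 1 := by
    rintro ⟨v, hv, m, h1, h2, h3⟩
    exact ⟨m, h2, h3⟩
  choose m hm0 hm1 using hm
  let f : ↥(Vset 4 K) × {x : ZMod 4 // x ≠ 0} → (Fin K → ZMod 4) :=
    fun p => Function.update p.1.1 (m p.1) p.2.1
  have key : ∀ p p', f p = f p' → ¬ m p.1 < m p'.1 := by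
    intro p p' h hlt
    have h2 := congrFun h (m p'.1)
    simp only [f, Function.update_self, Function.update_of_ne hlt.ne'] at h2
    rw [hm0 _ _ hlt] at h2
    exact p'.2.2 h2.symm
  have hf : Function.Injective f := by
    intro p p' h
    have hmm : m p.1 = m p'.1 :=
      le_antisymm (not_lt.1 (key p' p h.symm)) (not_lt.1 (key p p' h))
    refine Prod.ext (Subtype.ext (funext fun i => ?_)) (Subtype.ext ?_)
    · by_cases hi : i = m p.1
      · have h1 := hm1 p.1
        have h2 := hm1 p'.1
        rw [← hmm] at h2
        rw [hi, h1, h2]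
      · have h2 := congrFun h i
        have hi' : i ≠ m p'.1 := hmm ▸ hi
        simpa only [f, Function.update_of_ne hi, Function.update_of_ne hi'] using h2
    · have h2 := congrFun h (m p.1)
      simp only [f, Function.update_self] at h2
      rw [hmm, Function.update_self] at h2
      exact h2
  have := Fintype.card_le_of_injective f hf
  have h3 : Fintype.card {x : ZMod 4 // x ≠ 0} = 3 := by
    rw [Fintype.card_subtype_compl]; simp [ZMod.card]
  rw [Fintype.card_prod, h3] at this
  simp only [Fintype.card_fun, ZMod.card, Fintype.card_fin] at this
  omega

theorem aux_hd (t w : ZMod 4) : ∑ s : ZMod 4, (if t ≠ w + s then 1 else 0) = 3 := by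
  revert t w
  decide

theorem aux_shift (K : ℕ) (m : Fin K) (g : (Fin K → ZMod 4) → ℕ)
    (hg : ∀ a : Fin K → ZMod 4, ∑ s : ZMod 4, g (a + Pi.single m s) = 3) :
    4 * ∑ a, g a = 3 * 4 ^ K := by
  have hs : ∀ s : ZMod 4, ∑ a : Fin K → ZMod 4, g (a + Pi.single m s) = ∑ a, g a := fun s =>
    Equiv.sum_comp (Equiv.addRight (Pi.single m s : Fin K → ZMod 4)) g
  have h4 : ∑ s : ZMod 4, ∑ a : Fin K → ZMod 4, g (a + Pi.single m s) = 4 * ∑ a, g a := by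
    rw [Finset.sum_congr rfl fun s _ => hs s, Finset.sum_const, Finset.card_univ, ZMod.card,
      smul_eq_mul]
  rw [← h4, Finset.sum_comm, Finset.sum_congr rfl fun a _ => hg a, Finset.sum_const,
    Finset.card_univ, Fintype.card_fun, ZMod.card, Fintype.card_fin, smul_eq_mul, mul_comm]

theorem aux_unif (K : ℕ) (v : ↥(Vset 4 K)) (t : ZMod 4) :
    4 * ∑ a : Fin K → ZMod 4, (if t ≠ ∑ i, a i * v.1 i then 1 else 0) = 3 * 4 ^ K := by
  obtain ⟨v, hv, m, h1, h2, h3⟩ := v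
  refine aux_shift K m (fun a => if t ≠ ∑ i, a i * v i then 1 else 0) fun a => ?_
  refine Eq.trans ?_ (aux_hd t (∑ i, a i * v i))
  refine Finset.sum_congr rfl fun s _ => ?_
  have : ∑ i, (a + Pi.single m s : Fin K → ZMod 4) i * v i = ∑ i, a i * v i + s := by
    simp [add_mul, Finset.sum_add_distrib, Pi.single_apply, h3]
  simp only [this]

open Classical in
theorem aux_exists (K : ℕ) (u : ↥(Vset 4 K) → ZMod 4) :
    ∃ c ∈ SimplexCode 4 K, 4 * hdist u c ≤ 3 * Fintype.card ↥(Vset 4 K) := by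
  by_contra! h
  have h1 : ∀ a : Fin K → ZMod 4, hdist u (fun v => ∑ i, a i * v.1 i)
      = ∑ v : ↥(Vset 4 K), (if u v ≠ ∑ i, a i * v.1 i then 1 else 0) := by
    intro a
    rw [hdist, Set.ncard_eq_toFinset_card', Finset.sum_boole]
    simp
  have h2 : ∑ a : Fin K → ZMod 4, 3 * Fintype.card ↥(Vset 4 K) <
      ∑ a : Fin K → ZMod 4, 4 * hdist u (fun v => ∑ i, a i * v.1 i) :=
    Finset.sum_lt_sum_of_nonempty Finset.univ_nonempty fun a _ => h _ ⟨a, rfl⟩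
  simp only [h1] at h2
  have h3 : ∑ a : Fin K → ZMod 4, 4 * ∑ v : ↥(Vset 4 K),
      (if u v ≠ ∑ i, a i * v.1 i then 1 else 0) = ∑ v : ↥(Vset 4 K), 3 * 4 ^ K := by
    rw [← Finset.mul_sum, Finset.sum_comm, Finset.mul_sum]
    refine Finset.sum_congr rfl fun v _ => ?_
    rw [← aux_unif K v (u v)]
  rw [h3] at h2
  simp only [Finset.sum_const, Finset.card_univ, Fintype.card_fun, ZMod.card, Fintype.card_fin,
    smul_eq_mul] at h2
  have : 4 ^ K * (3 * Fintype.card ↥(Vset 4 K)) = Fintype.card ↥(Vset 4 K) * (3 * 4 ^ K) := by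
    ring
  omega

/-- For `k ≥ 2`, the covering radius of the `ZMod 4`-Simplex code satisfies
`R(S_{k+1}(4)) ≤ (5·4^{k+1} + 3k - 29)/18`. -/
theorem covRad_simplex_four_le (k : ℕ) (hk : 2 ≤ k) :
    (covRad (SimplexCode 4 (k + 1)) : ℝ) ≤
      (5 * 4 ^ (k + 1) + 3 * (k : ℝ) - 29) / 18 := by
  classical
  have hR : 4 * covRad (SimplexCode 4 (k + 1)) ≤ 4 ^ (k + 1) := by
    have : covRad (SimplexCode 4 (k + 1)) ≤ 4 ^ (k + 1) / 4 := by
      apply csSup_le'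
      rintro r ⟨u, rfl⟩
      obtain ⟨c, hc, hle⟩ := aux_exists (k + 1) u
      have h1 : sInf {e | ∃ c ∈ SimplexCode 4 (k + 1), e = hdist u c} ≤ hdist u c :=
        Nat.sInf_le ⟨c, hc, rfl⟩
      have := aux_card (k + 1)
      omega
    omega
  have hR' : (4 : ℝ) * covRad (SimplexCode 4 (k + 1)) ≤ 4 ^ (k + 1) := by exact_mod_cast hR
  have hp : (4 : ℝ) ^ 3 ≤ 4 ^ (k + 1) := pow_le_pow_right₀ (by norm_num) (by omega)
  have hk' : (2 : ℝ) ≤ k := by exact_mod_cast hk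
  rw [le_div_iff₀ (by norm_num)]
  linarith
end

section
/- Let q ≥ 2 be an even integer and let 2 ≤ u ≤ r ≤ k. Then, as an inequality of real numbers, R(M_{k+1,u}) ≤ ((k-r+1)·(q-1)·φ(q) + (q² - q - φ(q))·q^r·(q^{k-r+1} - 1))/(q·(q-1)²) + R(M_{r,u}). -/
/-- `Wset q k u` is the set of columns of the `ZMod q`-MacDonald code `M_{k,u}`: the columns
`v ∈ Vset q k` having a nonzero coordinate at some index `i < k - u`. -/
def Wset (q k u : ℕ) : Set (Fin k → ZMod q) :=
  {v | v ∈ Vset q k ∧ ∃ i : Fin k, (i : ℕ) < k - u ∧ v i ≠ 0}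

/-- The `ZMod q`-MacDonald code `M_{k,u}`: the words obtained by evaluating a linear form
`x` at all columns `v ∈ Wset q k u`. -/
def MacDonaldCode (q k u : ℕ) : Set (↥(Wset q k u) → ZMod q) :=
  {c | ∃ x : Fin k → ZMod q, c = fun v : ↥(Wset q k u) => ∑ i, x i * v.1 i}

open Classical in
theorem aux_hdist_s17 {q : ℕ} {α : Type*} [Fintype α] (S : Set α) (f g : α → ZMod q) :
    hdist (fun v : ↥S => f v.1) (fun v : ↥S => g v.1)
      = (Finset.univ.filter (fun v => v ∈ S ∧ f v ≠ g v)).card := by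
  unfold hdist
  rw [← Set.ncard_image_of_injective _ Subtype.val_injective, ← Set.ncard_coe_finset]
  congr 1
  ext v
  simp [and_comm]

theorem aux_cov_attained {q : ℕ} {I : Type*} [Finite I] (C : Set (I → ZMod q)) :
    ∃ w : I → ZMod q, ∀ c ∈ C, covRad C ≤ hdist w c := by
  by_cases hC : C.Nonempty
  · have hb : BddAbove {r | ∃ u : I → ZMod q, r = sInf {e | ∃ c ∈ C, e = hdist u c}} := by
      refine ⟨Nat.card I, ?_⟩
      rintro _ ⟨u, rfl⟩
      obtain ⟨c, hc⟩ := hC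
      exact (Nat.sInf_le (s := {e | ∃ c ∈ C, e = hdist u c}) ⟨c, hc, rfl⟩).trans (Set.ncard_le_card _)
    obtain ⟨w, hw⟩ := Nat.sSup_mem (s := {r | ∃ u : I → ZMod q, r = sInf {e | ∃ c ∈ C, e = hdist u c}}) ⟨_, 0, rfl⟩ hb
    refine ⟨w, fun c hc => ?_⟩
    unfold covRad
    rw [hw]
    exact Nat.sInf_le ⟨c, hc, rfl⟩
  · exact ⟨0, fun c hc => (hC ⟨c, hc⟩).elim⟩

theorem aux_cov_le {q : ℕ} {I : Type*} [Finite I] (C : Set (I → ZMod q)) (hC : C.Nonempty)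
    (w : I → ZMod q) : ∃ c ∈ C, hdist w c ≤ covRad C := by
  have hb : BddAbove {r | ∃ u : I → ZMod q, r = sInf {e | ∃ c ∈ C, e = hdist u c}} := by
    refine ⟨Nat.card I, ?_⟩
    rintro _ ⟨u, rfl⟩
    obtain ⟨c, hc⟩ := hC
    exact (Nat.sInf_le (s := {e | ∃ c ∈ C, e = hdist u c}) ⟨c, hc, rfl⟩).trans (Set.ncard_le_card _)
  obtain ⟨c0, hc0⟩ := hC
  obtain ⟨c, hc, he⟩ := Nat.sInf_mem (s := {e | ∃ c ∈ C, e = hdist w c}) ⟨_, c0, hc0, rfl⟩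
  exact ⟨c, hc, he ▸ le_csSup hb ⟨w, rfl⟩⟩

theorem aux_cons_mem {q : ℕ} (hq : 2 ≤ q) {j : ℕ} (a : ZMod q) (v : Fin j → ZMod q) :
    (Fin.cons a v : Fin (j + 1) → ZMod q) ∈ Vset q (j + 1) ↔ v ∈ Vset q j ∨ (a = 1 ∧ v = 0) := by
  haveI : Fact (1 < q) := ⟨hq⟩
  have key : ∀ (k : ℕ) (v : Fin k → ZMod q), v ∈ Vset q k ↔ ∃ m, v m = 1 ∧ ∀ i, m < i → v i = 0 := by
    intro k v
    constructor
    · rintro ⟨_, m, _, h1, h2⟩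
      exact ⟨m, h2, h1⟩
    · rintro ⟨m, h2, h1⟩
      have : v m ≠ 0 := by rw [h2]; exact one_ne_zero
      exact ⟨fun h => this (by rw [h]; rfl), m, this, h1, h2⟩
  rw [key, key, Fin.exists_fin_succ]
  simp only [Fin.cons_zero, Fin.cons_succ, Fin.forall_fin_succ, Fin.succ_lt_succ_iff]
  simp only [lt_irrefl, false_imp_iff, true_and, Fin.succ_pos, true_imp_iff, Fin.not_lt_zero]
  rw [or_comm, funext_iff]
  rfl

theorem aux_cons_memW {q : ℕ} (hq : 2 ≤ q) {j u : ℕ} (hu : u ≤ j) (v : Fin j → ZMod q) :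
    (Fin.cons 0 v : Fin (j + 1) → ZMod q) ∈ Wset q (j + 1) u ↔ v ∈ Wset q j u := by
  haveI : Fact (1 < q) := ⟨hq⟩
  unfold Wset
  simp only [Set.mem_setOf_eq, aux_cons_mem hq, Fin.exists_fin_succ, Fin.cons_zero, Fin.cons_succ,
    Fin.val_succ]
  have h : ∀ i : Fin j, (i : ℕ) + 1 < j + 1 - u ↔ (i : ℕ) < j - u := fun i => by omega
  simp [h]

open Classical in
theorem aux_card_s17 {q : ℕ} (hq : 2 ≤ q) [NeZero q] (j : ℕ) (P : ZMod q → Prop)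
    [DecidablePred P]
    [DecidablePred (fun v : Fin (j + 1) → ZMod q => v ∈ Vset q (j + 1) ∧ P (v 0))] :
    (Finset.univ.filter (fun v : Fin (j + 1) → ZMod q => v ∈ Vset q (j + 1) ∧ P (v 0))).card
      = (Finset.univ.filter P).card * (Finset.univ.filter (fun v => v ∈ Vset q j)).card
        + if P 1 then 1 else 0 := by
  have h1 : (Finset.univ.filter (fun v : Fin (j + 1) → ZMod q => v ∈ Vset q (j + 1) ∧ P (v 0)))
      = ((Finset.univ.filter P ×ˢ (Finset.univ.filter (fun v => v ∈ Vset q j))) ∪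
        ((if P 1 then {1} else ∅ : Finset (ZMod q)) ×ˢ ({0} : Finset (Fin j → ZMod q)))).image
        (fun p => (Fin.cons p.1 p.2 : Fin (j + 1) → ZMod q)) := by
    ext v
    refine Fin.consCases (fun a v => ?_) v
    have hinj : ∀ (b : ZMod q) (z : Fin j → ZMod q),
        (Fin.cons b z : Fin (j + 1) → ZMod q) = Fin.cons a v ↔ b = a ∧ z = v := fun b z => by
      rw [Fin.cons_inj]
    simp only [Finset.mem_filter, Finset.mem_univ, true_and, aux_cons_mem hq, Fin.cons_zero,
      Finset.mem_image, Finset.mem_union, Finset.mem_product, Prod.exists, hinj,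
      Finset.mem_singleton]
    constructor
    · rintro ⟨h | ⟨rfl, rfl⟩, hP⟩
      · exact ⟨a, v, Or.inl ⟨hP, h⟩, rfl, rfl⟩
      · exact ⟨1, 0, Or.inr ⟨by simp [hP], rfl⟩, rfl, rfl⟩
    · rintro ⟨b, z, h, rfl, rfl⟩
      rcases h with ⟨h, h'⟩ | ⟨h, rfl⟩
      · exact ⟨Or.inl h', h⟩
      · split_ifs at h with hP
        · rw [Finset.mem_singleton] at h
          subst h
          exact ⟨Or.inr ⟨rfl, rfl⟩, hP⟩
        · simp at h
  rw [h1, Finset.card_image_of_injective, Finset.card_union_of_disjoint, Finset.card_product,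
    Finset.card_product]
  · split_ifs <;> simp
  · rw [Finset.disjoint_left]
    rintro ⟨a, v⟩ h h'
    simp only [Finset.mem_filter, Finset.mem_univ, true_and, Finset.mem_product,
      Finset.mem_singleton] at h h'
    exact h.2.1 h'.2
  · rintro ⟨a, v⟩ ⟨b, z⟩ h
    have := Fin.cons_inj.1 h
    exact Prod.ext this.1 this.2

open Classical in
theorem aux_cardV {q : ℕ} (hq : 2 ≤ q) [NeZero q] (j : ℕ) :
    (q - 1) * (Finset.univ.filter (fun v => v ∈ Vset q j)).card + 1 = q ^ j := by
  induction j with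
  | zero =>
    have : (Finset.univ.filter (fun v => v ∈ Vset q 0)) = ∅ := by
      ext v
      simp only [Finset.mem_filter, Finset.mem_univ, true_and, Finset.notMem_empty, iff_false]
      rintro ⟨_, m, _⟩
      exact m.elim0
    rw [this]; simp
  | succ j ih =>
    have := aux_card_s17 hq j (fun _ => True)
    simp only [and_true, if_true, Finset.filter_true, Finset.card_univ, ZMod.card] at this
    rw [this, pow_succ, ← ih]
    obtain ⟨p, rfl⟩ : ∃ p, q = p + 1 := ⟨q - 1, by omega⟩
    simp only [Nat.add_sub_cancel]
    ring

open Classical in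
theorem aux_units_s17 {q : ℕ} [NeZero q] [DecidablePred (fun a : ZMod q => IsUnit a)] :
    (Finset.univ.filter (fun a : ZMod q => IsUnit a)).card = Nat.totient q := by
  rw [← ZMod.card_units_eq_totient, ← Finset.card_univ,
    ← Finset.card_image_of_injective Finset.univ (Units.val_injective (α := ZMod q))]
  congr 1
  ext a
  rw [Finset.mem_filter, Finset.mem_image]
  simp only [Finset.mem_univ, true_and]
  rfl

open Classical in
theorem aux_t {q : ℕ} [NeZero q] (a s w : ZMod q) :
    (∑ t : ZMod q, if w ≠ t * a + s then 1 else 0) + (if IsUnit a then 1 else 0) ≤ q := by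
  have hc : (∑ t : ZMod q, 1) = q := by simp
  split_ifs with h
  · obtain ⟨b, rfl⟩ := h
    have : (∑ t : ZMod q, if w ≠ t * (b : ZMod q) + s then 1 else 0)
        + ∑ t : ZMod q, (if t = (w - s) * ((b⁻¹ : (ZMod q)ˣ) : ZMod q) then 1 else 0) ≤ q := by
      rw [← Finset.sum_add_distrib]
      refine (Finset.sum_le_sum (g := fun _ => 1) fun t _ => ?_).trans hc.le
      by_cases ht : t = (w - s) * ((b⁻¹ : (ZMod q)ˣ) : ZMod q)
      · have : w = t * (b : ZMod q) + s := by
          rw [ht, mul_assoc, Units.inv_mul]; ring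
        simp [← this, ht]
      · simp only [ht, if_false]
        split_ifs <;> simp
    simpa using this
  · refine (Finset.sum_le_sum (g := fun _ => 1) fun t _ => ?_).trans hc.le
    split_ifs <;> simp

open Classical in
theorem aux_step {q : ℕ} (hq : 2 ≤ q) [NeZero q] {j u : ℕ} (hu : u ≤ j) :
    q * covRad (MacDonaldCode q (j + 1) u)
      + Nat.totient q * (Finset.univ.filter (fun v => v ∈ Vset q j)).card
      ≤ q * q ^ j + q * covRad (MacDonaldCode q j u) := by
  haveI : Fact (1 < q) := ⟨hq⟩
  obtain ⟨w, hw⟩ := aux_cov_attained (MacDonaldCode q (j + 1) u)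
  obtain ⟨f, rfl⟩ : ∃ f : (Fin (j + 1) → ZMod q) → ZMod q, w = fun v => f v.1 :=
    ⟨fun v => if h : v ∈ Wset q (j + 1) u then w ⟨v, h⟩ else 0, by ext v; simp⟩
  obtain ⟨_, ⟨x, rfl⟩, hx⟩ := aux_cov_le (MacDonaldCode q j u) ⟨_, 0, rfl⟩
    (fun v => f (Fin.cons 0 v.1))
  rw [aux_hdist_s17 (Wset q j u) (fun v => f (Fin.cons 0 v)) (fun v => ∑ i, x i * v i)] at hx
  -- columns with leading coordinate zero / nonzero
  set N := Finset.univ.filter (fun v : Fin (j + 1) → ZMod q => v ∈ Vset q (j + 1) ∧ v 0 ≠ 0) with hN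
  set U := Finset.univ.filter (fun v : Fin (j + 1) → ZMod q => v ∈ Vset q (j + 1) ∧ IsUnit (v 0))
    with hU
  have hUN : U = N.filter (fun v => IsUnit (v 0)) := by
    ext v
    simp only [hN, hU, Finset.mem_filter, Finset.mem_univ, true_and]
    constructor
    · rintro ⟨h, h'⟩
      exact ⟨⟨h, h'.ne_zero⟩, h'⟩
    · rintro ⟨⟨h, _⟩, h'⟩
      exact ⟨h, h'⟩
  have hNc : N.card = q ^ j := by
    have h := aux_card_s17 hq j (fun a => a ≠ 0)
    have h0 : (Finset.univ.filter (fun a : ZMod q => a ≠ 0)).card = q - 1 := by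
      rw [Finset.filter_ne', Finset.card_erase_of_mem (Finset.mem_univ _), Finset.card_univ,
        ZMod.card]
    rw [← aux_cardV hq j]
    rw [← h0]
    rw [if_pos one_ne_zero] at h
    exact h
  have hUc : Nat.totient q * (Finset.univ.filter (fun v => v ∈ Vset q j)).card ≤ U.card := by
    have h := aux_card_s17 hq j (fun a => IsUnit a)
    rw [aux_units_s17] at h
    have h2 := Nat.le.intro h.symm
    exact h2
  have hd : ∀ t : ZMod q, covRad (MacDonaldCode q (j + 1) u) ≤ covRad (MacDonaldCode q j u) +
      ∑ v ∈ N, if f v ≠ t * v 0 + ∑ i, x i * v (Fin.succ i) then 1 else 0 := by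
    intro t
    refine (hw _ ⟨Fin.cons t x, rfl⟩).trans ?_
    rw [aux_hdist_s17 (Wset q (j + 1) u) f (fun v => ∑ i, (Fin.cons t x : Fin (j + 1) → ZMod q) i * v i),
      ← Finset.card_filter]
    refine le_trans ?_ (Nat.add_le_add_right hx _)
    rw [← Finset.card_image_of_injective (f := fun v => (Fin.cons 0 v : Fin (j + 1) → ZMod q))
      _ (fun a b h => (Fin.cons_inj.1 h).2)]
    refine le_trans (Finset.card_le_card ?_) (Finset.card_union_le _ _)
    intro v
    refine Fin.consCases (fun a v => ?_) v
    simp only [Finset.mem_filter, Finset.mem_univ, true_and, Finset.mem_union, Finset.mem_image,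
      Fin.sum_univ_succ, Fin.cons_zero, Fin.cons_succ, hN]
    rintro ⟨h, h'⟩
    by_cases ha : a = 0
    · subst ha
      left
      refine ⟨v, ⟨(aux_cons_memW hq hu v).1 h, ?_⟩, rfl⟩
      simpa using h'
    · right
      exact ⟨⟨h.1, ha⟩, h'⟩
  have hs := Finset.sum_le_sum (s := Finset.univ) fun t _ => hd t
  rw [Finset.sum_add_distrib, Finset.sum_comm] at hs
  simp only [Finset.sum_const, Finset.card_univ, ZMod.card, smul_eq_mul] at hs
  have hs2 := Finset.sum_le_sum (s := N) fun v _ =>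
    aux_t (v 0) (∑ i, x i * v (Fin.succ i)) (f v)
  rw [Finset.sum_add_distrib, ← Finset.card_filter, ← hUN, Finset.sum_const, hNc, smul_eq_mul,
    mul_comm (q ^ j)] at hs2
  linarith

/-- For even `q` and `2 ≤ u ≤ r ≤ k`, the covering radius of the `ZMod q`-MacDonald code
satisfies
`R(M_{k+1,u}) ≤ ((k-r+1)(q-1)φ(q) + (q²-q-φ(q))q^r(q^{k-r+1}-1))/(q(q-1)²) + R(M_{r,u})`. -/
theorem covRad_macdonald_le (q k u r : ℕ) (hq : 2 ≤ q) (hqe : Even q)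
    (hu : 2 ≤ u) (hur : u ≤ r) (hrk : r ≤ k) :
    (covRad (MacDonaldCode q (k + 1) u) : ℝ) ≤
      (((k : ℝ) - (r : ℝ) + 1) * ((q : ℝ) - 1) * (Nat.totient q : ℝ) +
          ((q : ℝ) ^ 2 - (q : ℝ) - (Nat.totient q : ℝ)) * (q : ℝ) ^ r *
            ((q : ℝ) ^ (k - r + 1) - 1)) /
        ((q : ℝ) * ((q : ℝ) - 1) ^ 2) +
      (covRad (MacDonaldCode q r u) : ℝ) := by
  haveI : NeZero q := ⟨by omega⟩
  have hq1 : (1 : ℝ) < q := by exact_mod_cast hq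
  have hq0 : (0 : ℝ) < q := by linarith
  have step : ∀ j, u ≤ j → (covRad (MacDonaldCode q (j + 1) u) : ℝ) ≤
      covRad (MacDonaldCode q j u) +
      ((q : ℝ) ^ j - (Nat.totient q : ℝ) * ((q : ℝ) ^ j - 1) / (q * (q - 1))) := by
    intro j hj
    classical
    have h1 := aux_step hq hj
    have h2 := aux_cardV hq j
    set c := (Finset.univ.filter (fun v => v ∈ Vset q j)).card
    have h1' : (q : ℝ) * covRad (MacDonaldCode q (j + 1) u) + Nat.totient q * c
      ≤ q * (q : ℝ) ^ j + q * covRad (MacDonaldCode q j u) := by exact_mod_cast h1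
    have h2' : ((q : ℝ) - 1) * c + 1 = (q : ℝ) ^ j := by
      rw [← Nat.cast_pow, ← h2]
      push_cast [Nat.cast_sub (show 1 ≤ q by omega)]
      ring
    have h3 : (Nat.totient q : ℝ) * ((q : ℝ) ^ j - 1) / (q * (q - 1)) = Nat.totient q * c / q := by
      rw [← h2']
      have : (q : ℝ) - 1 ≠ 0 := by linarith
      field_simp
      ring
    rw [h3]
    have h4 : (q : ℝ) * (Nat.totient q * c / q) = Nat.totient q * c := by field_simp
    refine le_of_mul_le_mul_left ?_ hq0
    rw [mul_add, mul_sub, h4]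
    linarith
  obtain ⟨d, rfl⟩ := Nat.exists_eq_add_of_le hrk
  clear hrk
  have hm : (q : ℝ) - 1 ≠ 0 := by linarith
  rw [Nat.add_sub_cancel_left]
  induction d with
  | zero =>
    refine (step r hur).trans (le_of_eq ?_)
    push_cast
    simp only [Nat.add_zero, zero_add, pow_one]
    field_simp
    ring
  | succ d ih =>
    refine (step (r + (d + 1)) (by omega)).trans ?_
    refine (add_le_add_left ih _).trans (le_of_eq ?_)
    push_cast
    simp only [pow_add, pow_one]
    field_simp
    ring
end

section
/- Let q ≥ 2 be an even integer and let k ≥ 2. Then R(M_{k+1,k}) ≤ ⌊(q-1)·φ(q)·n_k/q⌋ + (q-1-φ(q))·n_k + 1, where n_k = (q^k - 1)/(q - 1). -/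
open Classical in
noncomputable def auxF (q k : ℕ) (u : Fin k → ZMod q) : Fin (k+1) → ZMod q :=
  if h : ∃ m, u m ≠ 0 ∧ ∀ i, m < i → u i = 0 then
    Fin.cons (u h.choose) (Function.update u h.choose 1)
  else Fin.cons 1 0

lemma W_subset (q k : ℕ) : Wset q (k+1) k ⊆ Set.range (auxF q k) := by
  rintro v ⟨⟨-, m, hm0, hmi, hm1⟩, i, hi, hvi⟩
  have hi0 : i = 0 := by
    apply Fin.ext; rw [Fin.val_zero]; omega
  subst hi0
  induction m using Fin.cases with
  | zero =>
    refine ⟨0, ?_⟩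
    rw [auxF, dif_neg (by simp)]
    funext j
    induction j using Fin.cases with
    | zero => simp [hm1]
    | succ j => simp [hmi j.succ (Fin.succ_pos j)]
  | succ j =>
    refine ⟨Function.update (Fin.tail v) j (v 0), ?_⟩
    have h : ∃ m, (Function.update (Fin.tail v) j (v 0)) m ≠ 0 ∧
        ∀ i, m < i → (Function.update (Fin.tail v) j (v 0)) i = 0 := by
      refine ⟨j, by simpa using hvi, fun i hi => ?_⟩
      rw [Function.update_of_ne hi.ne']
      exact hmi _ (Fin.succ_lt_succ_iff.2 hi)
    have hc : h.choose = j := by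
      obtain ⟨h1, h2⟩ := h.choose_spec
      rcases lt_trichotomy h.choose j with hl | hl | hl
      · exact absurd (h2 j hl) (by simpa using hvi)
      · exact hl
      · refine absurd ?_ h1
        rw [Function.update_of_ne hl.ne']
        exact hmi _ (Fin.succ_lt_succ_iff.2 hl)
    rw [auxF, dif_pos h, hc]
    funext i
    induction i using Fin.cases with
    | zero => simp
    | succ i =>
      by_cases hij : i = j
      · subst hij; simp [hm1]
      · simp [Function.update_of_ne hij, Fin.tail]

lemma W_card (q k : ℕ) [NeZero q] : Nat.card (Wset q (k+1) k) ≤ q ^ k := by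
  calc Nat.card (Wset q (k+1) k) ≤ Nat.card (Set.range (auxF q k)) :=
        Nat.card_mono (Set.toFinite _) (W_subset q k)
    _ ≤ Nat.card (Fin k → ZMod q) := Finite.card_range_le _
    _ = q ^ k := by simp

lemma fiber_card (q n : ℕ) [NeZero q] (v : Fin n → ZMod q) (m : Fin n) (hm : v m = 1)
    (t : ZMod q) :
    q * (Finset.univ.filter fun x : Fin n → ZMod q => ∑ i, x i * v i = t).card = q ^ n := by
  classical
  let f : (Fin n → ZMod q) →+ ZMod q :=
    { toFun := fun x => ∑ i, x i * v i
      map_zero' := by simp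
      map_add' := by intro x y; simp [add_mul, Finset.sum_add_distrib] }
  have hs : ∀ s, s ∈ Set.range f := fun s => ⟨Pi.single m s, by
    simp [f, Pi.single_apply, hm]⟩
  have h1 := Finset.card_eq_sum_card_fiberwise (f := f) (s := Finset.univ) (t := Finset.univ)
    (by intro x _; simp)
  rw [Finset.sum_congr rfl (fun s _ => AddMonoidHom.card_fiber_eq_of_mem_range f (hs s) (hs t))]
    at h1
  simp [ZMod.card] at h1
  rw [h1]; rfl

lemma key (q k : ℕ) [NeZero q] (hq : 2 ≤ q) (w : ↥(Wset q (k+1) k) → ZMod q) :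
    ∃ x : Fin (k+1) → ZMod q,
      q * hdist w (fun v => ∑ i, x i * v.1 i) ≤ (q - 1) * q ^ k := by
  classical
  by_contra! hcon
  have : Fintype ↥(Wset q (k+1) k) := Fintype.ofFinite _
  have hd : ∀ x : Fin (k+1) → ZMod q, hdist w (fun v => ∑ i, x i * v.1 i) =
      ∑ v : ↥(Wset q (k+1) k), if ∑ i, x i * v.1 i = w v then 0 else 1 := by
    intro x
    have : ∀ v : ↥(Wset q (k+1) k), (if ∑ i, x i * v.1 i = w v then 0 else 1)
        = if w v ≠ ∑ i, x i * v.1 i then 1 else 0 := by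
      intro v
      by_cases h : w v = ∑ i, x i * v.1 i
      · simp [h]
      · simp [h, Ne.symm h]
    rw [Finset.sum_congr rfl fun v _ => this v, ← Finset.card_filter, hdist,
      ← Set.ncard_coe_finset]
    simp
  have hv : ∀ v : ↥(Wset q (k+1) k),
      q * ∑ x : Fin (k+1) → ZMod q, (if ∑ i, x i * v.1 i = w v then 0 else 1)
        = (q - 1) * q ^ (k+1) := by
    intro v
    obtain ⟨-, m, -, -, hm⟩ := v.2.1
    have h1 := fiber_card q (k+1) v.1 m hm (w v)
    have h2 := Finset.card_filter_add_card_filter_not (s := Finset.univ)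
      (fun x : Fin (k+1) → ZMod q => ∑ i, x i * v.1 i = w v)
    have h3 : ∑ x : Fin (k+1) → ZMod q, (if ∑ i, x i * v.1 i = w v then 0 else 1)
        = (Finset.univ.filter fun x : Fin (k+1) → ZMod q => ¬ ∑ i, x i * v.1 i = w v).card := by
      rw [Finset.card_filter]
      refine Finset.sum_congr rfl fun x _ => ?_
      split_ifs <;> rfl
    rw [h3]
    simp only [Finset.card_univ, Fintype.card_pi, ZMod.card, Finset.prod_const,
      Fintype.card_fin] at h2
    obtain ⟨p, rfl⟩ : ∃ p, q = p + 1 := ⟨q - 1, by omega⟩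
    simp only [Nat.add_sub_cancel]
    have h4 := congrArg ((p + 1) * ·) h2
    simp only [mul_add] at h4
    linarith
  have hsum : ∑ x : Fin (k+1) → ZMod q, q * hdist w (fun v => ∑ i, x i * v.1 i)
      = Nat.card (Wset q (k+1) k) * ((q - 1) * q ^ (k+1)) := by
    simp_rw [hd]
    rw [← Finset.mul_sum, Finset.sum_comm, Finset.mul_sum, Finset.sum_congr rfl fun v _ => hv v]
    simp
  have hlt : ∑ x : Fin (k+1) → ZMod q, (q - 1) * q ^ k <
      ∑ x : Fin (k+1) → ZMod q, q * hdist w (fun v => ∑ i, x i * v.1 i) :=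
    Finset.sum_lt_sum_of_nonempty Finset.univ_nonempty fun x _ => hcon x
  rw [hsum] at hlt
  simp only [Finset.sum_const, Finset.card_univ, Fintype.card_pi, ZMod.card, Finset.prod_const,
      Fintype.card_fin, smul_eq_mul] at hlt
  have h5 := Nat.mul_le_mul_right ((q - 1) * q ^ (k+1)) (W_card q k)
  have h6 : q ^ (k+1) * ((q-1) * q^k) = q^k * ((q-1) * q^(k+1)) := by ring
  omega

/-- For even `q` and `k ≥ 2`, the covering radius of the `ZMod q`-MacDonald code satisfies
`R(M_{k+1,k}) ≤ ⌊(q-1)·φ(q)·n_k/q⌋ + (q-1-φ(q))·n_k + 1`, where `n_k = (q^k-1)/(q-1)`. -/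
theorem covRad_macdonald_top_le (q k : ℕ) (hq : 2 ≤ q) (hqe : Even q) (hk : 2 ≤ k) :
    covRad (MacDonaldCode q (k + 1) k) ≤
      (q - 1) * Nat.totient q * ((q ^ k - 1) / (q - 1)) / q +
        (q - 1 - Nat.totient q) * ((q ^ k - 1) / (q - 1)) + 1 := by
  have : NeZero q := ⟨by omega⟩
  apply csSup_le'
  rintro r ⟨w, rfl⟩
  obtain ⟨x, hx⟩ := key q k hq w
  refine le_trans (Nat.sInf_le ⟨_, ⟨x, rfl⟩, rfl⟩) ?_
  set d := hdist w (fun v => ∑ i, x i * v.1 i)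
  have hφ : Nat.totient q ≤ q - 1 := by
    have := Nat.totient_lt q (by omega)
    omega
  have hdvd : (q - 1) * ((q ^ k - 1) / (q - 1)) = q ^ k - 1 :=
    Nat.mul_div_cancel' (by simpa using Nat.sub_dvd_pow_sub_pow q 1 k)
  have hpos : 1 ≤ q ^ k := Nat.one_le_pow _ _ (by omega)
  set n := (q ^ k - 1) / (q - 1)
  obtain ⟨s, hs⟩ := Nat.exists_eq_add_of_le hφ
  obtain ⟨p, rfl⟩ : ∃ p, q = p + 1 := ⟨q - 1, by omega⟩
  set f := Nat.totient (p + 1)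
  simp only [Nat.add_sub_cancel] at *
  have hqk : (p + 1) ^ k = p * n + 1 := by omega
  have hpf : p - f = s := by omega
  rw [hpf]
  rw [hqk] at hx
  suffices d - (s * n + 1) ≤ p * f * n / (p + 1) by omega
  rw [Nat.le_div_iff_mul_le (by omega), Nat.sub_mul, Nat.sub_le_iff_le_add]
  have e : p * (p * n + 1) = p * f * n + p * (s * n) + p := by
    conv_lhs => rw [show p * (p * n + 1) = p * (p * n) + p by ring]
    nth_rw 2 [hs]
    ring
  nlinarith [Nat.zero_le (s * n)]
end

section
/- Let q ≥ 2 be an even integer and let k ≥ u ≥ 2 with k ≥ 2. Then, as an inequality of real numbers, R(M_{k+1,u}) ≤ ((k-u)·(q-1)·φ(q) + (q² - q - φ(q))·q^{u+1}·(q^{k-u} - 1))/(q·(q-1)²) + (q-1)·φ(q)·n_u/q + (q-1-φ(q))·n_u + 1, where n_u = (q^u - 1)/(q - 1). -/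
open Finset in
lemma fib_card (q K : ℕ) [NeZero q] (v : Fin K → ZMod q) (m : Fin K) (hm : v m = 1) (b : ZMod q) :
    q * (univ.filter (fun x : Fin K → ZMod q => ∑ i, x i * v i = b)).card = q ^ K := by
  have key : ∀ c : ZMod q,
      (univ.filter (fun x : Fin K → ZMod q => ∑ i, x i * v i = c)).card =
      (univ.filter (fun x : Fin K → ZMod q => ∑ i, x i * v i = b)).card := by
    intro c
    refine Finset.card_bij' (fun x _ => x + Pi.single m (b - c))
      (fun x _ => x - Pi.single m (b - c)) ?_ ?_ ?_ ?_
    · intro x hx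
      simp only [mem_filter, mem_univ, true_and] at hx ⊢
      simp [add_mul, Finset.sum_add_distrib, hx, Pi.single_apply, hm]
    · intro x hx
      simp only [mem_filter, mem_univ, true_and] at hx ⊢
      simp [sub_mul, Finset.sum_sub_distrib, hx, Pi.single_apply, hm]
    · intro x hx; simp
    · intro x hx; simp
  have h := Finset.card_eq_sum_card_fiberwise
    (f := fun x : Fin K → ZMod q => ∑ i, x i * v i) (s := univ) (t := univ) (by simp)
  simp only [key] at h
  simpa [ZMod.card] using h.symm

open Finset in
lemma low_card (q K u : ℕ) [NeZero q] (hu : u ≤ K) :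
    (univ.filter (fun v : Fin K → ZMod q => ∃ i : Fin K, (i : ℕ) < K - u ∧ v i ≠ 0)).card
      + q ^ u ≤ q ^ K := by
  have h := Finset.card_filter_add_card_filter_not (s := (univ : Finset (Fin K → ZMod q)))
    (fun v : Fin K → ZMod q => ∃ i : Fin K, (i : ℕ) < K - u ∧ v i ≠ 0)
  have h2 : (univ : Finset (Fin u → ZMod q)).card ≤
    (univ.filter (fun v : Fin K → ZMod q => ¬ ∃ i : Fin K, (i : ℕ) < K - u ∧ v i ≠ 0)).card := by
    apply Finset.card_le_card_of_injOn
      (fun w (i : Fin K) => if h : (i : ℕ) < K - u then 0 else w ⟨i - (K - u), by have := i.2; omega⟩)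
    · intro w _
      simp only [coe_filter, mem_univ, true_and, Set.mem_setOf_eq]
      rintro ⟨i, hi, h⟩
      simp [hi] at h
    · intro w _ w' _ h
      funext j
      have := congrFun h ⟨j + (K - u), by have := j.2; omega⟩
      simpa using this
  simp [ZMod.card] at h h2
  simp only [ne_eq] at *
  push Not at *
  omega

open Finset in
lemma W_card_s19 (q K u : ℕ) [NeZero q] (hu : u ≤ K) [Fintype ↥(Wset q K u)] :
    Fintype.card ↥(Wset q K u) * (q - 1) + q ^ u ≤ q ^ K := by
  classical
  refine le_trans (Nat.add_le_add_right ?_ _) (low_card q K u hu)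
  have hp : ∀ v : ↥(Wset q K u), ∃ m : Fin K, v.1 m ≠ 0 ∧ (∀ i, m < i → v.1 i = 0) ∧ v.1 m = 1 :=
    fun v => v.2.1.2
  choose p hp0 hpl hp1 using hp
  have hc : (univ.filter (fun a : ZMod q => a ≠ 0)).card = q - 1 := by
    rw [Finset.filter_ne', Finset.card_erase_of_mem (mem_univ _)]; simp [ZMod.card]
  rw [← hc, ← Finset.card_univ, ← Finset.card_product]
  apply Finset.card_le_card_of_injOn (fun z => Function.update z.1.1 (p z.1) z.2)
  · rintro ⟨v, a⟩ h
    simp only [coe_product, Set.mem_prod, coe_filter, mem_univ, true_and, Set.mem_setOf_eq] at h ⊢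
    obtain ⟨i, hi, h0⟩ := v.2.2
    refine ⟨i, hi, ?_⟩
    by_cases hip : i = p v
    · subst hip; simpa using h.2
    · simpa [Function.update_of_ne hip] using h0
  · rintro ⟨v, a⟩ h ⟨v', a'⟩ h' he
    simp only [coe_product, Set.mem_prod, coe_filter, mem_univ, true_and, Set.mem_setOf_eq] at h h' he
    have hpp : p v = p v' := by
      rcases lt_trichotomy (p v) (p v') with hl | hl | hl
      · have := congrFun he (p v')
        rw [Function.update_of_ne hl.ne', hpl v _ hl, Function.update_self] at this
        exact absurd this.symm h'.2
      · exact hl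
      · have := congrFun he (p v)
        rw [Function.update_of_ne hl.ne', hpl v' _ hl, Function.update_self] at this
        exact absurd this h.2
    have ha : a = a' := by
      have := congrFun he (p v)
      rwa [Function.update_self, hpp, Function.update_self] at this
    have hv : v = v' := by
      apply Subtype.ext
      funext i
      by_cases hip : i = p v
      · rw [hip, hp1, hpp, hp1]
      · have := congrFun he i
        rwa [Function.update_of_ne hip, Function.update_of_ne (hpp ▸ hip)] at this
    rw [ha, hv]

open Finset in
lemma exists_close_s19 (q K u : ℕ) (hq : 2 ≤ q) (hu : u ≤ K) (w : ↥(Wset q K u) → ZMod q) :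
    ∃ x : Fin K → ZMod q,
      hdist w (fun v : ↥(Wset q K u) => ∑ i, x i * v.1 i) * q + q ^ u ≤ q ^ K := by
  classical
  haveI : NeZero q := ⟨by omega⟩
  haveI : Fintype ↥(Wset q K u) := Fintype.ofFinite _
  have hd : ∀ x : Fin K → ZMod q, hdist w (fun v : ↥(Wset q K u) => ∑ i, x i * v.1 i)
      = ∑ v : ↥(Wset q K u), if ∑ i, x i * v.1 i = w v then 0 else 1 := by
    intro x
    unfold hdist
    rw [Set.ncard_eq_toFinset_card', Set.toFinset_setOf, Finset.card_filter]
    refine Finset.sum_congr rfl fun v _ => ?_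
    by_cases h : ∑ i, x i * v.1 i = w v
    · simp [h]
    · simp [h, Ne.symm h]
  have hs : ∀ v : ↥(Wset q K u),
      (∑ x : Fin K → ZMod q, if ∑ i, x i * v.1 i = w v then 0 else 1) * q = q ^ K * (q - 1) := by
    intro v
    obtain ⟨m, _, _, hm⟩ := v.2.1.2
    have h1 := fib_card q K v.1 m hm (w v)
    have h2 := Finset.card_filter_add_card_filter_not (s := (univ : Finset (Fin K → ZMod q)))
      (fun x => ∑ i, x i * v.1 i = w v)
    have h3 : (∑ x : Fin K → ZMod q, if ∑ i, x i * v.1 i = w v then 0 else 1) =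
        (univ.filter (fun x : Fin K → ZMod q => ¬ ∑ i, x i * v.1 i = w v)).card := by
      rw [Finset.card_filter]
      refine Finset.sum_congr rfl fun x _ => ?_
      by_cases h : ∑ i, x i * v.1 i = w v <;> simp [h]
    rw [h3]
    simp only [Finset.card_univ, Fintype.card_fun, ZMod.card, Fintype.card_fin] at h2
    obtain ⟨r, rfl⟩ : ∃ r, q = r + 1 := ⟨q - 1, by omega⟩
    simp only [Nat.add_sub_cancel]
    nlinarith
  by_contra! hcon
  have hW := W_card_s19 q K u hu
  have htot : (∑ x : Fin K → ZMod q, hdist w (fun v : ↥(Wset q K u) => ∑ i, x i * v.1 i)) * q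
      = Fintype.card ↥(Wset q K u) * (q ^ K * (q - 1)) := by
    simp_rw [hd]
    rw [Finset.sum_comm, Finset.sum_mul, Finset.sum_congr rfl (fun v _ => hs v)]
    simp
  have hlt : ∑ x : Fin K → ZMod q, q ^ K < ∑ x : Fin K → ZMod q,
      (hdist w (fun v : ↥(Wset q K u) => ∑ i, x i * v.1 i) * q + q ^ u) :=
    Finset.sum_lt_sum_of_nonempty univ_nonempty (fun x _ => hcon x)
  rw [Finset.sum_add_distrib, ← Finset.sum_mul, htot] at hlt
  simp only [Finset.sum_const, Finset.card_univ, Fintype.card_fun, ZMod.card, Fintype.card_fin,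
    smul_eq_mul] at hlt
  have := Nat.mul_le_mul_left (q ^ K) hW
  nlinarith

lemma covRad_bound (q K u : ℕ) (hq : 2 ≤ q) (hu : u ≤ K) :
    covRad (MacDonaldCode q K u) * q + q ^ u ≤ q ^ K := by
  have hle : covRad (MacDonaldCode q K u) ≤ (q ^ K - q ^ u) / q := by
    apply csSup_le
    · exact ⟨_, 0, rfl⟩
    · rintro r ⟨w, rfl⟩
      obtain ⟨x, hx⟩ := exists_close_s19 q K u hq hu w
      refine le_trans (Nat.sInf_le ⟨_, ⟨x, rfl⟩, rfl⟩) ?_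
      rw [Nat.le_div_iff_mul_le (by omega)]
      omega
  rw [Nat.le_div_iff_mul_le (by omega)] at hle
  have := Nat.pow_le_pow_right (show 0 < q by omega) hu
  omega

/-- For even `q` and `k ≥ u ≥ 2` with `k ≥ 2`, the covering radius of the
`ZMod q`-MacDonald code satisfies
`R(M_{k+1,u}) ≤ ((k-u)(q-1)φ(q) + (q²-q-φ(q))q^{u+1}(q^{k-u}-1))/(q(q-1)²)
  + (q-1)φ(q)n_u/q + (q-1-φ(q))n_u + 1`, where `n_u = (q^u-1)/(q-1)`. -/
theorem covRad_macdonald_le' (q k u : ℕ) (hq : 2 ≤ q) (hqe : Even q)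
    (hk : 2 ≤ k) (hu : 2 ≤ u) (huk : u ≤ k) :
    (covRad (MacDonaldCode q (k + 1) u) : ℝ) ≤
      (((k : ℝ) - (u : ℝ)) * ((q : ℝ) - 1) * (Nat.totient q : ℝ) +
          ((q : ℝ) ^ 2 - (q : ℝ) - (Nat.totient q : ℝ)) * (q : ℝ) ^ (u + 1) *
            ((q : ℝ) ^ (k - u) - 1)) /
        ((q : ℝ) * ((q : ℝ) - 1) ^ 2) +
      ((q : ℝ) - 1) * (Nat.totient q : ℝ) * (((q ^ u - 1) / (q - 1) : ℕ) : ℝ) / (q : ℝ) +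
      ((q : ℝ) - 1 - (Nat.totient q : ℝ)) * (((q ^ u - 1) / (q - 1) : ℕ) : ℝ) + 1 := by
  have hb := covRad_bound q (k + 1) u hq (by omega)
  have hn : ((q ^ u - 1) / (q - 1)) * (q - 1) = q ^ u - 1 :=
    Nat.div_mul_cancel (Nat.sub_one_dvd_pow_sub_one q u)
  have hf : Nat.totient q ≤ q - 1 := by
    have := Nat.totient_lt q (by omega)
    omega
  have hP1 : 1 ≤ q ^ u := Nat.one_le_pow _ _ (by omega)
  generalize covRad (MacDonaldCode q (k + 1) u) = d at *
  generalize (q ^ u - 1) / (q - 1) = n at *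
  generalize Nat.totient q = f at *
  have hnR : (n : ℝ) * ((q : ℝ) - 1) = (q : ℝ) ^ u - 1 := by
    have := congrArg (Nat.cast (R := ℝ)) hn
    push_cast [Nat.cast_sub hP1, Nat.cast_sub (show 1 ≤ q by omega)] at this
    exact this
  have hfR : (f : ℝ) ≤ (q : ℝ) - 1 := by
    have : f + 1 ≤ q := by omega
    have : (f : ℝ) + 1 ≤ q := by exact_mod_cast this
    linarith
  have hQ : (2 : ℝ) ≤ q := by exact_mod_cast hq
  obtain ⟨m, rfl⟩ := Nat.exists_eq_add_of_le huk
  have hbR : (d : ℝ) * q + (q : ℝ) ^ u ≤ (q : ℝ) ^ u * (q : ℝ) ^ m * q := by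
    have : (d : ℝ) * q + (q : ℝ) ^ u ≤ (q : ℝ) ^ (u + m + 1) := by exact_mod_cast hb
    rwa [pow_succ, pow_add] at this
  have hT : (1 : ℝ) ≤ (q : ℝ) ^ m := one_le_pow₀ (by linarith)
  have hP : (1 : ℝ) ≤ (q : ℝ) ^ u := one_le_pow₀ (by linarith)
  have hf0 : (0 : ℝ) ≤ f := Nat.cast_nonneg _
  have hn0 : (0 : ℝ) ≤ n := Nat.cast_nonneg _
  have hm0 : (0 : ℝ) ≤ m := Nat.cast_nonneg _
  rw [Nat.add_sub_cancel_left, pow_succ (q : ℝ) u]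
  push_cast
  generalize (q : ℝ) ^ u = P at *
  generalize (q : ℝ) ^ m = T at *
  generalize (q : ℝ) = Q at *
  generalize (f : ℝ) = F at *
  generalize (n : ℝ) = N at *
  generalize (d : ℝ) = D at *
  have h1 : P * (T - 1) ≤ (((u : ℝ) + m - u) * (Q - 1) * F + (Q ^ 2 - Q - F) * (P * Q) * (T - 1))
      / (Q * (Q - 1) ^ 2) := by
    rw [le_div_iff₀ (by have : 0 < Q - 1 := by linarith
                        positivity)]
    have e1 : 0 ≤ (m : ℝ) * (Q - 1) * F :=
      mul_nonneg (mul_nonneg hm0 (by linarith)) hf0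
    have e2 : 0 ≤ (Q - 1 - F) * (P * Q * (T - 1)) :=
      mul_nonneg (by linarith) (mul_nonneg (mul_nonneg (by linarith) (by linarith)) (by linarith))
    nlinarith
  have h2 : D + P / Q ≤ P * T := by
    have : D + P / Q = (D * Q + P) / Q := by field_simp
    rw [this, div_le_iff₀ (by linarith)]
    exact hbR
  have h3 : (Q - 1) * F * N / Q + (Q - 1 - F) * N = N * (Q - 1) - F * N / Q := by
    field_simp
    ring
  have h4 : F * N / Q ≤ P / Q := by
    apply div_le_div_of_nonneg_right _ (by linarith)
    nlinarith
  linarith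
end
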